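/- arXiv:1105.3464 — 3 statements merged into one kernel-verified Lean document; each statement's English description precedes it below -/
import Mathlib

section
/- Let f : {0,1}^n → {0,1} be a Boolean function with at least two essential variables. Then gap f = 2 if and only if f is equivalent to one of the following polynomial functions over GF(2): (1) x_1 + x_2 + ⋯ + x_m + c for some m ≥ 2, (2) x_1·x_2 + x_1 + c, (3) x_1·x_2 + x_1·x_3 + x_2·x_3 + c, (4) x_1·x_2 + x_1·x_3 + x_2·x_3 + x_1 + x_2 + c, where c ∈ {0,1}. Otherwise gap f = 1. -/
open Finset

section Defs

variable {A B : Type*}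

/-- The `i`-th variable is essential in `f`. -/
def essentialAt {n : ℕ} (f : (Fin n → A) → B) (i : Fin n) : Prop :=
  ∃ x x' : Fin n → A, (∀ k, k ≠ i → x k = x' k) ∧ f x ≠ f x'

/-- The essential arity of `f`: the number of its essential variables. -/
noncomputable def essArity {n : ℕ} (f : (Fin n → A) → B) : ℕ :=
  Nat.card {i : Fin n // essentialAt f i}

/-- The identification minor `f_{i ← j}`. -/
def idMinor {n : ℕ} (f : (Fin n → A) → B) (i j : Fin n) : (Fin n → A) → B :=
  fun x => f (Function.update x i (x j))

/-- The arity gap of `f`. -/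
noncomputable def arityGap {n : ℕ} (f : (Fin n → A) → B) : ℕ :=
  sInf {d : ℕ | ∃ i j : Fin n, i ≠ j ∧ essentialAt f i ∧ essentialAt f j ∧
    d = essArity f - essArity (idMinor f i j)}

/-- `oddsupp x` is the set of elements occurring an odd number of times in `x`. -/
def oddsupp {n : ℕ} [DecidableEq A] (x : Fin n → A) : Finset A :=
  (Finset.univ.image x).filter fun a => Odd ((Finset.univ.filter fun j => x j = a).card)

/-- `f` is determined by `oddsupp`. -/
def DeterminedByOddsupp {n : ℕ} [DecidableEq A] (f : (Fin n → A) → B) : Prop :=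
  ∃ φ : Finset A → B, ∀ x, f x = φ (oddsupp x)

/-- `oddsuppOn I x = oddsupp (x|_I)`. -/
def oddsuppOn {n : ℕ} [DecidableEq A] (I : Finset (Fin n)) (x : Fin n → A) : Finset A :=
  (I.image x).filter fun a => Odd ((I.filter fun j => x j = a).card)

/-- `f` is `k`-decomposable: a sum of functions with at most `k` essential variables. -/
def KDecomposable {n : ℕ} [AddCommMonoid B] (k : ℕ) (f : (Fin n → A) → B) : Prop :=
  ∃ (s : ℕ) (g : Fin s → (Fin n → A) → B),
    (∀ i, essArity (g i) ≤ k) ∧ ∀ x, f x = ∑ i, g i x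

/-- Partial derivative of `f` with respect to its `i`-th variable with parameter `a`. -/
def pDeriv {n : ℕ} [AddCommGroup B] (f : (Fin n → A) → B) (i : Fin n) (a : A) :
    (Fin n → A) → B :=
  fun x => f (Function.update x i a) - f x

/-- Higher-order partial derivative `Δ_I^a f`. -/
def pDerivFin {n : ℕ} [AddCommGroup B] (f : (Fin n → A) → B) (I : Finset (Fin n))
    (a : Fin n → A) : (Fin n → A) → B :=
  (I.sort (· ≤ ·)).foldr (fun i g => pDeriv g i (a i)) f

/-- `updateOn x J a` is the tuple `x_J^a`. -/
def updateOn {n : ℕ} (x : Fin n → A) (J : Finset (Fin n)) (a : Fin n → A) : Fin n → A :=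
  fun k => if k ∈ J then a k else x k

/-- `g` is a simple minor of `f`. -/
def IsSimpleMinor {n m : ℕ} (g : (Fin m → A) → B) (f : (Fin n → A) → B) : Prop :=
  ∃ σ : Fin n → Fin m, ∀ x : Fin m → A, g x = f (x ∘ σ)

/-- `f` and `g` are equivalent: each is a simple minor of the other. -/
def FnEquiv {n m : ℕ} (f : (Fin n → A) → B) (g : (Fin m → A) → B) : Prop :=
  IsSimpleMinor g f ∧ IsSimpleMinor f g

end Defs

namespace ArityGapProof

abbrev Z := ZMod 2

lemma z01 (a : Z) : a = 0 ∨ a = 1 := by revert a; decide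

lemma z4 (a : Z) : a + 1 ≠ a := by revert a; decide

/-- identifying `i,j` makes `k` inessential -/
def T1 {n : ℕ} (f : (Fin n → Z) → Z) (i j k : Fin n) : Prop :=
  ∀ x y : Fin n → Z, (∀ l, l ≠ k → x l = y l) → x i = x j → f x = f y

/-- identifying `i,j` makes the common variable inessential -/
def T2 {n : ℕ} (f : (Fin n → Z) → Z) (i j : Fin n) : Prop :=
  ∀ x y : Fin n → Z, (∀ l, l ≠ i → l ≠ j → x l = y l) → x i = x j → y i = y j → f x = f y

lemma T1.symm {n : ℕ} {f : (Fin n → Z) → Z} {i j k : Fin n} (h : T1 f i j k) : T1 f j i k :=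
  fun x y hxy e => h x y hxy e.symm

lemma T2.symm {n : ℕ} {f : (Fin n → Z) → Z} {i j : Fin n} (h : T2 f i j) : T2 f j i :=
  fun x y hxy e e' => h x y (fun l a b => hxy l b a) e.symm e'.symm

/-- point with prescribed values at `k,i,j` -/
def pt {n : ℕ} (k i j : Fin n) (x : Fin n → Z) (a b c : Z) : Fin n → Z :=
  fun t => if t = k then a else if t = i then b else if t = j then c else x t

lemma pt_self {n : ℕ} (k i j : Fin n) (x : Fin n → Z) : pt k i j x (x k) (x i) (x j) = x := by
  funext t; unfold pt; split_ifs <;> simp_all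

lemma agree {n : ℕ} (f : (Fin n → Z) → Z) (S : Finset (Fin n)) :
    (∀ s ∈ S, ¬ essentialAt f s) → ∀ x y : Fin n → Z, (∀ t, t ∉ S → x t = y t) → f x = f y := by
  classical
  induction S using Finset.induction_on with
  | empty =>
    intro _ x y h
    have : x = y := funext fun t => h t (by simp)
    rw [this]
  | insert s S hs ih =>
    intro h x y hxy
    have h1 : f x = f (Function.update x s (y s)) := by
      by_contra hne
      exact h s (by simp) ⟨x, Function.update x s (y s), fun k hk => by simp [hk], hne⟩
    rw [h1]
    apply ih (fun t ht => h t (by simp [ht]))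
    intro t ht
    by_cases e : t = s
    · subst e; simp
    · simp [e]; exact hxy t (by simp [e, ht])

section core

variable {n : ℕ} {f : (Fin n → Z) → Z}

/-- the "majority-like" conclusions -/
def MA (f : (Fin n → Z) → Z) (k i j : Fin n) : Prop :=
  ∀ x, let F := fun a b c => f (pt k i j x a b c)
    F 1 0 0 = F 0 0 0 ∧ F 1 0 1 = F 0 0 0 ∧ F 1 1 0 = F 0 0 0 ∧
    F 0 1 1 = F 1 1 1 ∧ F 0 1 0 = F 1 1 1 ∧ F 0 0 1 = F 1 1 1

def MB (f : (Fin n → Z) → Z) (k i j : Fin n) : Prop :=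
  ∀ x, let F := fun a b c => f (pt k i j x a b c)
    F 1 0 0 = F 0 0 0 ∧ F 0 1 0 = F 0 0 0 ∧ F 0 0 1 = F 0 0 0 ∧
    F 0 1 1 = F 1 1 1 ∧ F 1 0 1 = F 1 1 1 ∧ F 1 1 0 = F 1 1 1

/-- Facts on restricted functions. -/
lemma f1 {i j k : Fin n} (hki : k ≠ i) (hkj : k ≠ j) (hij : i ≠ j) (h : T1 f i j k)
    (x : Fin n → Z) (b : Z) : f (pt k i j x 0 b b) = f (pt k i j x 1 b b) := by
  apply h
  · intro l hl; simp [pt, hl]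
  · simp [pt, hki.symm, hkj.symm, hij.symm]

lemma f1' {i j k : Fin n} (hki : k ≠ i) (hkj : k ≠ j) (hij : i ≠ j) (h : T1 f k j i)
    (x : Fin n → Z) (b : Z) : f (pt k i j x b 0 b) = f (pt k i j x b 1 b) := by
  apply h
  · intro l hl; simp [pt, hl]
  · simp [pt, hkj.symm, hij.symm]

lemma f1'' {i j k : Fin n} (hki : k ≠ i) (hkj : k ≠ j) (hij : i ≠ j) (h : T1 f k i j)
    (x : Fin n → Z) (b : Z) : f (pt k i j x b b 0) = f (pt k i j x b b 1) := by
  apply h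
  · intro l hl; simp [pt, hl]
  · simp [pt, hki.symm]

lemma f2 {i j k : Fin n} (hki : k ≠ i) (hkj : k ≠ j) (hij : i ≠ j) (h : T2 f k j)
    (x : Fin n → Z) (b : Z) : f (pt k i j x 0 b 0) = f (pt k i j x 1 b 1) := by
  apply h
  · intro l hl hl'; simp [pt, hl, hl']
  · simp [pt, hkj.symm, hij.symm]
  · simp [pt, hkj.symm, hij.symm]

lemma f2' {i j k : Fin n} (hki : k ≠ i) (hkj : k ≠ j) (hij : i ≠ j) (h : T2 f k i)
    (x : Fin n → Z) (b : Z) : f (pt k i j x 0 0 b) = f (pt k i j x 1 1 b) := by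
  apply h
  · intro l hl hl'; simp [pt, hl, hl']
  · simp [pt, hki.symm]
  · simp [pt, hki.symm]

lemma f1m {i j k m : Fin n} (hki : k ≠ i) (h : T1 f k i m)
    (x y : Fin n → Z) (hxy : ∀ l, l ≠ m → x l = y l) (b c : Z) :
    f (pt k i j x b b c) = f (pt k i j y b b c) := by
  apply h
  · intro l hl; simp [pt, hxy l hl]
  · simp [pt, hki.symm]

/-- `k` is essential: contradiction if every slice is independent of `k`. -/
lemma kcontra {i j k : Fin n} (hki : k ≠ i) (hkj : k ≠ j) (hk : essentialAt f k)
    (h : ∀ x b c, f (pt k i j x 0 b c) = f (pt k i j x 1 b c)) : False := by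
  obtain ⟨x, y, hxy, hne⟩ := hk
  apply hne
  rw [← pt_self k i j x, ← pt_self k i j y, ← hxy i hki.symm, ← hxy j hkj.symm]
  have : ∀ a, pt k i j y a (x i) (x j) = pt k i j x a (x i) (x j) := by
    intro a; funext t; unfold pt; split_ifs <;> simp_all
  rw [this]
  have := h x (x i) (x j)
  rcases z01 (x k) with h1 | h1 <;> rcases z01 (y k) with h2 | h2 <;> simp [h1, h2, this]

/-- `m` off `k,i,j` is essential: contradiction if all slices agree. -/
lemma mcontra {i j k m : Fin n} (hmi : m ≠ i) (hmj : m ≠ j) (hmk : m ≠ k) (hm : essentialAt f m)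
    (h : ∀ x y : Fin n → Z, (∀ l, l ≠ m → x l = y l) →
      ∀ a b c, f (pt k i j x a b c) = f (pt k i j y a b c)) : False := by
  obtain ⟨x, y, hxy, hne⟩ := hm
  apply hne
  rw [← pt_self k i j x, ← pt_self k i j y, ← hxy i hmi.symm, ← hxy j hmj.symm, ← hxy k hmk.symm]
  exact h x y hxy _ _ _

lemma caseA {i j k : Fin n} (hki : k ≠ i) (hkj : k ≠ j) (hij : i ≠ j)
    (ess : ∀ t, essentialAt f t)
    (cond : ∀ i j, i ≠ j → T2 f i j ∨ ∃ k, k ≠ i ∧ k ≠ j ∧ T1 f i j k)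
    (h : T1 f i j k) (h2 : T2 f k j) : MA f k i j := by
  have e1 := f1 hki hkj hij h
  have e2 := f2 hki hkj hij h2
  rcases cond k i hki with h3 | ⟨m, hmk, hmi, h3⟩
  · have e3 := f2' hki hkj hij h3
    intro x
    have a1 := e1 x 0
    have a2 := e1 x 1
    have a3 := e2 x 0
    have a4 := e2 x 1
    have a5 := e3 x 0
    have a6 := e3 x 1
    simp only
    grind
  · exfalso
    by_cases hmj : m = j
    · subst hmj
      have e3 := f1'' hki hkj hij h3
      apply kcontra hki hkj (ess k)
      intro x b c
      have a1 := e1 x 0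
      have a2 := e1 x 1
      have a3 := e2 x 0
      have a4 := e2 x 1
      have a5 := e3 x 0
      have a6 := e3 x 1
      rcases z01 b with rfl | rfl <;> rcases z01 c with rfl | rfl <;> grind
    · apply mcontra (f := f) (k := k) hmi hmj hmk (ess m)
      intro x y hxy a b c
      have e3 := f1m (j := j) hki h3 x y hxy
      have a1 := e1 x 0
      have a2 := e1 x 1
      have a3 := e2 x 0
      have a4 := e2 x 1
      have b1 := e1 y 0
      have b2 := e1 y 1
      have b3 := e2 y 0
      have b4 := e2 y 1
      have c1 := e3 0 0
      have c2 := e3 0 1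
      have c3 := e3 1 0
      have c4 := e3 1 1
      rcases z01 a with rfl | rfl <;> rcases z01 b with rfl | rfl <;>
        rcases z01 c with rfl | rfl <;> grind

lemma caseB {i j k : Fin n} (hki : k ≠ i) (hkj : k ≠ j) (hij : i ≠ j)
    (ess : ∀ t, essentialAt f t)
    (cond : ∀ i j, i ≠ j → T2 f i j ∨ ∃ k, k ≠ i ∧ k ≠ j ∧ T1 f i j k)
    (h : T1 f i j k) (h2 : T1 f k j i) : MB f k i j := by
  have e1 := f1 hki hkj hij h
  have e2 := f1' hki hkj hij h2
  rcases cond k i hki with h3 | ⟨m, hmk, hmi, h3⟩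
  · exfalso
    have e3 := f2' hki hkj hij h3
    apply kcontra hki hkj (ess k)
    intro x b c
    have a1 := e1 x 0
    have a2 := e1 x 1
    have a3 := e2 x 0
    have a4 := e2 x 1
    have a5 := e3 x 0
    have a6 := e3 x 1
    rcases z01 b with rfl | rfl <;> rcases z01 c with rfl | rfl <;> grind
  · by_cases hmj : m = j
    · subst hmj
      have e3 := f1'' hki hkj hij h3
      intro x
      have a1 := e1 x 0
      have a2 := e1 x 1
      have a3 := e2 x 0
      have a4 := e2 x 1
      have a5 := e3 x 0
      have a6 := e3 x 1
      simp only
      grind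
    · exfalso
      apply mcontra (f := f) (k := k) hmi hmj hmk (ess m)
      intro x y hxy a b c
      have e3 := f1m (j := j) hki h3 x y hxy
      have a1 := e1 x 0
      have a2 := e1 x 1
      have a3 := e2 x 0
      have a4 := e2 x 1
      have b1 := e1 y 0
      have b2 := e1 y 1
      have b3 := e2 y 0
      have b4 := e2 y 1
      have c1 := e3 0 0
      have c2 := e3 0 1
      have c3 := e3 1 0
      have c4 := e3 1 1
      rcases z01 a with rfl | rfl <;> rcases z01 b with rfl | rfl <;>
        rcases z01 c with rfl | rfl <;> grind

/-- With a fourth variable, the majority-like cases are impossible. -/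
lemma noMaj {i j k l : Fin n} (hki : k ≠ i) (hkj : k ≠ j) (hij : i ≠ j)
    (hlk : l ≠ k) (hli : l ≠ i) (hlj : l ≠ j)
    (ess : ∀ t, essentialAt f t)
    (cond : ∀ i j, i ≠ j → T2 f i j ∨ ∃ k, k ≠ i ∧ k ≠ j ∧ T1 f i j k)
    (h : MA f k i j ∨ MB f k i j) : False := by
  rcases cond k l hlk.symm with h3 | ⟨m, hmk, hml, h3⟩
  · -- l inessential
    have key : ∀ x y : Fin n → Z, (∀ t, t ≠ l → x t = y t) → x l = 0 → y l = 1 → ∀ b c,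
        f (pt k i j x 0 b c) = f (pt k i j y 1 b c) := by
      intro x y hxy hx hy b c
      apply h3
      · intro t ht ht'; simp [pt, ht, hxy t ht']
      · simp [pt, hlk, hli, hlj, hx]
      · simp [pt, hlk, hli, hlj, hy]
    have key2 : ∀ x y : Fin n → Z, (∀ t, t ≠ l → x t = y t) → x l = 0 → y l = 1 → ∀ a b c,
        f (pt k i j x a b c) = f (pt k i j y a b c) := by
      intro x y hxy hx hy a b c
      have c1 := key x y hxy hx hy 0 0
      have c2 := key x y hxy hx hy 1 1
      rcases h with h | h
      all_goals
        have hx := h x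
        have hy := h y
        simp only at hx hy
        rcases z01 a with rfl | rfl <;> rcases z01 b with rfl | rfl <;>
        rcases z01 c with rfl | rfl <;> grind
    apply mcontra (f := f) hli hlj hlk (ess l)
    intro x y hxy a b c
    rcases z01 (x l) with hx | hx <;> rcases z01 (y l) with hy | hy
    · have : x = y := by
        funext t
        by_cases ht : t = l
        · rw [ht, hx, hy]
        · exact hxy t ht
      rw [this]
    · exact key2 x y hxy hx hy a b c
    · exact (key2 y x (fun t ht => (hxy t ht).symm) hy hx a b c).symm
    · have : x = y := by
        funext t
        by_cases ht : t = l
        · rw [ht, hx, hy]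
        · exact hxy t ht
      rw [this]
  · by_cases hmi : m = i
    · subst hmi
      have key : ∀ (x : Fin n → Z) (c : Z),
          f (pt k m j x (x l) 0 c) = f (pt k m j x (x l) 1 c) := by
        intro x c
        apply h3
        · intro t ht; simp [pt, ht]
        · simp [pt, hlk, hli, hlj]
      apply kcontra hki hkj (ess k)
      intro x b c
      have c1 := key x 0
      have c2 := key x 1
      rcases h with h | h
      all_goals
        have hx := h x
        simp only at hx
        rcases z01 (x l) with h0 | h0 <;> rw [h0] at c1 c2 <;>
        rcases z01 b with rfl | rfl <;> rcases z01 c with rfl | rfl <;> grind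
    · by_cases hmj : m = j
      · subst hmj
        have key : ∀ (x : Fin n → Z) (c : Z),
            f (pt k i m x (x l) c 0) = f (pt k i m x (x l) c 1) := by
          intro x c
          apply h3
          · intro t ht; simp [pt, ht]
          · simp [pt, hlk, hli, hlj]
        apply kcontra hki hkj (ess k)
        intro x b c
        have c1 := key x 0
        have c2 := key x 1
        rcases h with h | h
        all_goals
          have hx := h x
          simp only at hx
          rcases z01 (x l) with h0 | h0 <;> rw [h0] at c1 c2 <;>
          rcases z01 b with rfl | rfl <;> rcases z01 c with rfl | rfl <;> grind
      · apply mcontra (f := f) (k := k) hmi hmj hmk (ess m)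
        intro x y hxy a b c
        have key : ∀ b c : Z, f (pt k i j x (x l) b c) = f (pt k i j y (x l) b c) := by
          intro b c
          apply h3
          · intro t ht; simp [pt, hxy t ht]
          · simp [pt, hlk, hli, hlj]
        have c1 := key 0 0
        have c2 := key 1 1
        rcases h with h | h
        all_goals
          have hx := h x
          have hy := h y
          simp only at hx hy
          rcases z01 (x l) with h0 | h0 <;> rw [h0] at c1 c2 <;>
          rcases z01 a with rfl | rfl <;> rcases z01 b with rfl | rfl <;>
          rcases z01 c with rfl | rfl <;> grind

/-- Transfer lemma. -/
lemma transfer {i j k m : Fin n} (hki : k ≠ i) (hkj : k ≠ j) (hmi : m ≠ i)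
    (hmj : m ≠ j) (hmk : m ≠ k) (h : T1 f i j k) (h2 : T1 f k j m) : T1 f i j m := by
  intro x y hxy e
  have ey : y i = y j := by rw [← hxy i hmi.symm, ← hxy j hmj.symm, e]
  have h3 : f x = f (Function.update x k (x j)) :=
    h _ _ (fun l hl => by simp [hl]) e
  have h4 : f y = f (Function.update y k (x j)) :=
    h _ _ (fun l hl => by simp [hl]) ey
  rw [h3, h4]
  apply h2
  · intro l hl
    by_cases hlk : l = k
    · subst hlk; simp
    · simp [hlk, hxy l hl]
  · simp [hkj.symm]

lemma allT2 (hn : 4 ≤ n) (ess : ∀ t, essentialAt f t)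
    (cond : ∀ i j, i ≠ j → T2 f i j ∨ ∃ k, k ≠ i ∧ k ≠ j ∧ T1 f i j k) :
    ∀ i j, i ≠ j → T2 f i j := by
  classical
  intro i₀ j₀ hij₀
  rcases cond i₀ j₀ hij₀ with h | ⟨k₀, hki₀, hkj₀, h₀⟩
  · exact h
  exfalso
  have grow : ∀ s : ℕ, ∃ (k j : Fin n) (S : Finset (Fin n)), s + 1 ≤ S.card ∧ k ∉ S ∧ j ∉ S ∧
      k ≠ j ∧ ∀ i ∈ S, T1 f i j k := by
    intro s
    induction s with
    | zero => exact ⟨k₀, j₀, {i₀}, by simp, by simpa using hki₀, by simpa using hij₀.symm, hkj₀,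
        by simpa using h₀⟩
    | succ s ih =>
      obtain ⟨k, j, S, hS, hk, hj, hkj, hT⟩ := ih
      have noP : ∀ i ∈ S, ¬ T2 f k j ∧ ¬ T1 f k j i := by
        intro i hi
        have hki : k ≠ i := fun e => hk (e ▸ hi)
        have hij : i ≠ j := fun e => hj (e ▸ hi)
        obtain ⟨l, hl⟩ : ∃ l, l ∉ ({k, i, j} : Finset (Fin n)) := by
          by_contra hcon
          push Not at hcon
          have h1 : (Finset.univ : Finset (Fin n)) ⊆ {k, i, j} := fun t _ => hcon t
          have h2 := Finset.card_le_card h1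
          have h3 : ({k, i, j} : Finset (Fin n)).card ≤ 3 := Finset.card_le_three
          simp at h2
          omega
        simp at hl
        obtain ⟨hlk, hli, hlj⟩ := hl
        exact ⟨fun h2 => noMaj hki hkj hij hlk hli hlj ess cond
            (Or.inl (caseA hki hkj hij ess cond (hT i hi) h2)),
          fun h2 => noMaj hki hkj hij hlk hli hlj ess cond
            (Or.inr (caseB hki hkj hij ess cond (hT i hi) h2))⟩
      obtain ⟨i, hi⟩ : S.Nonempty := Finset.card_pos.mp (by omega)
      rcases cond k j hkj with h | ⟨m, hmk, hmj, h⟩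
      · exact absurd h (noP i hi).1
      have hmS : m ∉ S := fun hm => (noP m hm).2 h
      refine ⟨m, j, insert k S, ?_, ?_, ?_, hmj, ?_⟩
      · rw [Finset.card_insert_of_notMem hk]; omega
      · simp [hmk, hmS]
      · simp [hkj.symm, hj]
      · intro t ht
        rcases Finset.mem_insert.mp ht with rfl | ht
        · exact h
        · exact transfer (by rintro rfl; exact hk ht) hkj (by rintro rfl; exact hmS ht) hmj hmk (hT t ht) h
  obtain ⟨k, j, S, hS, -⟩ := grow n
  have := Finset.card_le_univ S
  simp at this
  omega

/-- all pairs of type T2 with at least three variables: affine -/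
lemma affine (hn : 3 ≤ n) (ess : ∀ t, essentialAt f t) (h : ∀ i j, i ≠ j → T2 f i j) :
    ∃ c, ∀ x, f x = (∑ i, x i) + c := by
  classical
  let fl : Fin n → (Fin n → Z) → (Fin n → Z) := fun i x => Function.update x i (x i + 1)
  have flfl : ∀ i x, fl i (fl i x) = x := by
    intro i x; funext t
    by_cases e : t = i
    · subst e
      simp only [fl, Function.update_self]
      generalize x t = a
      revert a; decide
    · simp [fl, e]
  have flne : ∀ i j x, i ≠ j → fl i x j = x j := by
    intro i j x e; simp [fl, e.symm]
  have fleq : ∀ i x, fl i x i = x i + 1 := by intro i x; simp [fl]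
  have comm : ∀ i j x, fl i (fl j x) = fl j (fl i x) := by
    intro i j x
    by_cases e : i = j
    · rw [e]
    · funext t
      by_cases e1 : t = i
      · subst e1; simp [fl, e]
      · by_cases e2 : t = j
        · subst e2; simp [fl, e1]
        · simp [fl, e1, e2]
  -- flipping an equal pair
  have s1 : ∀ i j x, i ≠ j → x i = x j → f (fl i (fl j x)) = f x := by
    intro i j x e hx
    apply h i j e
    · intro l h1 h2; rw [flne _ _ _ h1.symm, flne _ _ _ h2.symm]
    · rw [fleq, flne _ _ _ e.symm, flne _ _ _ e, fleq, hx]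
    · exact hx
  have s2 : ∀ i j x, i ≠ j → f (fl i (fl j x)) = f x := by
    intro i j x e
    by_cases hx : x i = x j
    · exact s1 i j x e hx
    obtain ⟨l, hl⟩ : ∃ l, l ∉ ({i, j} : Finset (Fin n)) := by
      by_contra hcon
      push Not at hcon
      have h1 : (Finset.univ : Finset (Fin n)) ⊆ {i, j} := fun t _ => hcon t
      have h2 := Finset.card_le_card h1
      have h3 : ({i, j} : Finset (Fin n)).card ≤ 2 := Finset.card_le_two
      simp at h2
      omega
    simp at hl
    obtain ⟨hli, hlj⟩ := hl
    have main : ∀ i j x, i ≠ j → l ≠ i → l ≠ j → x i = x l → x j ≠ x i →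
        f (fl i (fl j x)) = f x := by
      intro i j x e hli hlj h1 h2
      have a1 := s1 i l x hli.symm h1
      have a2 := s1 j l (fl i (fl l x)) hlj.symm (by
        rw [flne _ _ _ e, flne _ _ _ hlj, flne _ _ _ hli.symm, fleq, ← h1]
        revert h2
        generalize x i = a
        generalize x j = b
        revert a b; decide)
      rw [← a1, ← a2, comm i l, flfl, comm]
    by_cases h1 : x i = x l
    · exact main i j x e hli hlj h1 (fun h => hx h.symm)
    · rw [comm]
      apply main j i x e.symm hlj hli _ hx
      revert hx h1
      generalize x i = a
      generalize x j = b
      generalize x l = c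
      revert a b c; decide
  have s3 : ∀ i j x, f (fl i x) = f (fl j x) := by
    intro i j x
    by_cases e : i = j
    · rw [e]
    · have := s2 i j (fl j x) e
      rwa [flfl] at this
  have upd : ∀ (x y : Fin n → Z) i, (∀ k, k ≠ i → x k = y k) → x ≠ y → y = fl i x := by
    intro x y i hxy hne
    funext t
    by_cases e : t = i
    · subst e
      rw [fleq]
      have : x t ≠ y t := by
        intro h0; apply hne; funext s
        by_cases e : s = t
        · rw [e, h0]
        · exact hxy s e
      revert this
      generalize x t = a
      generalize y t = b
      revert a b; decide
    · rw [flne _ _ _ (Ne.symm e), hxy t e]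
  have i0 : Fin n := ⟨0, by omega⟩
  -- derivative is constant
  have dc : ∀ x y, f (fl i0 x) + f x = f (fl i0 y) + f y := by
    intro x y
    refine agree (fun x => f (fl i0 x) + f x) Finset.univ ?_ x y (by simp)
    rintro s - ⟨x, y, hxy, hne⟩
    apply hne
    by_cases hh : x = y
    · rw [hh]
    rw [upd x y s hxy hh]
    simp only
    rw [s3 i0 s x, s3 i0 s (fl s x), flfl, add_comm]
  have d1 : ∀ i x, f (fl i x) + f x = 1 := by
    intro i x
    obtain ⟨y, z, hyz, hne⟩ := ess i
    have hh : y ≠ z := fun e => hne (by rw [e])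
    rw [upd y z i hyz hh] at hne
    rw [s3 i i0 x, dc x y, s3 i0 i y]
    revert hne
    generalize f y = a
    generalize f (fl i y) = b
    revert a b; decide
  refine ⟨f 0, fun x => ?_⟩
  have := agree (fun x => f x + ∑ i, x i) Finset.univ ?_ x 0 (by simp)
  · simp only [Pi.zero_apply, Finset.sum_const_zero, add_zero] at this
    rw [← this]
    generalize f x = a
    generalize ∑ i, x i = b
    revert a b; decide
  · rintro s - ⟨x, y, hxy, hne⟩
    apply hne
    by_cases hh : x = y
    · rw [hh]
    rw [upd x y s hxy hh]
    have e1 : ∑ i, fl s x i = ∑ i, x i + 1 := by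
      rw [← Finset.add_sum_erase _ _ (Finset.mem_univ s),
        ← Finset.add_sum_erase _ x (Finset.mem_univ s), fleq]
      have : ∑ t ∈ Finset.univ.erase s, fl s x t = ∑ t ∈ Finset.univ.erase s, x t := by
        apply Finset.sum_congr rfl
        intro t ht
        exact flne _ _ _ (Finset.ne_of_mem_erase ht).symm
      rw [this]; ring
    have e2 := d1 s x
    simp only [e1]
    revert e2
    generalize f x = a
    generalize f (fl s x) = b
    generalize ∑ i, x i = c
    revert a b c; decide

end core

lemma essArity_eq {n : ℕ} {A B : Type*} (f : (Fin n → A) → B) [DecidablePred (essentialAt f)] :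
    essArity f = (Finset.univ.filter (essentialAt f)).card := by
  unfold essArity
  rw [Nat.card_eq_fintype_card, Fintype.card_subtype]

lemma not_ess_minor {n : ℕ} {f : (Fin n → Z) → Z} {i j : Fin n} (hij : i ≠ j) :
    ¬ essentialAt (idMinor f i j) i := by
  rintro ⟨x, y, hxy, hne⟩
  apply hne
  have : Function.update x i (x j) = Function.update y i (y j) := by
    funext t
    by_cases e : t = i
    · subst e; simp [hxy j hij.symm]
    · simp [e, hxy t e]
  simp [idMinor, this]

/-- the list -/
def Listed {n : ℕ} (f : (Fin n → ZMod 2) → ZMod 2) : Prop :=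
      ∃ c : ZMod 2,
        (∃ m : ℕ, 2 ≤ m ∧ FnEquiv f (fun x : Fin m → ZMod 2 => (∑ i, x i) + c)) ∨
        FnEquiv f (fun x : Fin 2 → ZMod 2 => x 0 * x 1 + x 0 + c) ∨
        FnEquiv f (fun x : Fin 3 → ZMod 2 => x 0 * x 1 + x 0 * x 2 + x 1 * x 2 + c) ∨
        FnEquiv f (fun x : Fin 3 → ZMod 2 =>
          x 0 * x 1 + x 0 * x 2 + x 1 * x 2 + x 0 + x 1 + c)

lemma FnEquiv.refl' {n : ℕ} (f : (Fin n → Z) → Z) : FnEquiv f f :=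
  ⟨⟨id, fun _ => rfl⟩, ⟨id, fun _ => rfl⟩⟩

lemma IsSimpleMinor.trans' {n m p : ℕ} {f : (Fin n → Z) → Z} {g : (Fin m → Z) → Z}
    {h : (Fin p → Z) → Z} (h1 : IsSimpleMinor f g) (h2 : IsSimpleMinor g h) :
    IsSimpleMinor f h := by
  obtain ⟨s, hs⟩ := h1
  obtain ⟨t, ht⟩ := h2
  exact ⟨s ∘ t, fun x => by rw [hs, ht]; rfl⟩

lemma FnEquiv.trans' {n m p : ℕ} {f : (Fin n → Z) → Z} {g : (Fin m → Z) → Z}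
    {h : (Fin p → Z) → Z} (h1 : FnEquiv f g) (h2 : FnEquiv g h) : FnEquiv f h :=
  ⟨IsSimpleMinor.trans' h2.1 h1.1, IsSimpleMinor.trans' h1.2 h2.2⟩

/-- Equivalence by a permutation of variables. -/
lemma FnEquiv.of_perm {n : ℕ} {f g : (Fin n → Z) → Z} (s : Fin n → Fin n)
    (hs : Function.Injective s) (h : ∀ x, f x = g (x ∘ s)) : FnEquiv f g := by
  have hb : Function.Bijective s := Finite.injective_iff_bijective.mp hs
  let e := Equiv.ofBijective s hb
  refine ⟨⟨e.symm, fun x => ?_⟩, ⟨s, h⟩⟩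
  rw [h]
  congr 1
  funext t
  simp only [Function.comp]
  congr 1
  exact (e.symm_apply_apply t).symm

lemma Listed.congr {n m : ℕ} {f : (Fin n → Z) → Z} {g : (Fin m → Z) → Z}
    (h : FnEquiv f g) (hg : Listed g) : Listed f := by
  obtain ⟨c, ⟨m, hm, h1⟩ | h1 | h1 | h1⟩ := hg
  · exact ⟨c, Or.inl ⟨m, hm, FnEquiv.trans' h h1⟩⟩
  · exact ⟨c, Or.inr (Or.inl (FnEquiv.trans' h h1))⟩
  · exact ⟨c, Or.inr (Or.inr (Or.inl (FnEquiv.trans' h h1)))⟩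
  · exact ⟨c, Or.inr (Or.inr (Or.inr (FnEquiv.trans' h h1)))⟩

lemma listed_two {f : (Fin 2 → Z) → Z} (ess : ∀ t, essentialAt f t)
    (h : T2 f 0 1) : Listed f := by
  have hv : ∀ x : Fin 2 → Z, x = ![x 0, x 1] := by
    intro x; funext t; fin_cases t <;> rfl
  have h00 : f ![0, 0] = f ![1, 1] := by
    apply h
    · intro l; fin_cases l <;> simp
    · simp
    · simp
  have hne : ¬ (f ![0, 1] = f ![0, 0] ∧ f ![1, 0] = f ![0, 0]) := by
    rintro ⟨h1, h2⟩
    obtain ⟨x, y, -, hne⟩ := ess 0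
    apply hne
    rw [hv x, hv y]
    rcases z01 (x 0) with e1 | e1 <;> rcases z01 (x 1) with e2 | e2 <;>
    rcases z01 (y 0) with e3 | e3 <;> rcases z01 (y 1) with e4 | e4 <;>
    rw [e1, e2, e3, e4] <;> simp [h1, h2, ← h00]
  by_cases h1 : f ![0, 1] = f ![0, 0]
  · -- x0 x1 + x0 + c
    refine ⟨f ![0, 0], Or.inr (Or.inl (FnEquiv.of_perm id Function.injective_id ?_))⟩
    have h2 : f ![1, 0] ≠ f ![0, 0] := fun h2 => hne ⟨h1, h2⟩
    intro x
    have hx := hv x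
    rcases z01 (x 0) with e1 | e1 <;> rcases z01 (x 1) with e2 | e2 <;>
      rw [e1, e2] at hx <;> rw [hx] <;> simp <;>
      revert h00 h1 h2 <;> generalize f ![0, 0] = a <;> generalize f ![0, 1] = b <;>
      generalize f ![1, 0] = c <;> generalize f ![1, 1] = d <;> revert a b c d <;> decide
  · by_cases h2 : f ![1, 0] = f ![0, 0]
    · refine ⟨f ![0, 0], Or.inr (Or.inl (FnEquiv.of_perm ![1, 0] (by decide) ?_))⟩
      intro x
      have hx := hv x
      rcases z01 (x 0) with e1 | e1 <;> rcases z01 (x 1) with e2 | e2 <;>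
      rw [e1, e2] at hx <;> rw [hx] <;> simp <;>
      revert h00 h1 h2 <;> generalize f ![0, 0] = a <;> generalize f ![0, 1] = b <;>
      generalize f ![1, 0] = c <;> generalize f ![1, 1] = d <;> revert a b c d <;> decide
    · refine ⟨f ![0, 0], Or.inl ⟨2, le_rfl, FnEquiv.of_perm id Function.injective_id ?_⟩⟩
      intro x
      have hx := hv x
      rcases z01 (x 0) with e1 | e1 <;> rcases z01 (x 1) with e2 | e2 <;>
      rw [e1, e2] at hx <;> rw [hx] <;> simp <;>
      revert h00 h1 h2 <;> generalize f ![0, 0] = a <;> generalize f ![0, 1] = b <;>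
      generalize f ![1, 0] = c <;> generalize f ![1, 1] = d <;> revert a b c d <;> decide

lemma fin3 {i j k : Fin 3} (hki : k ≠ i) (hkj : k ≠ j) (hij : i ≠ j) (t : Fin 3) :
    t = k ∨ t = i ∨ t = j := by
  revert i j k t; decide

lemma pt3 {i j k : Fin 3} (hki : k ≠ i) (hkj : k ≠ j) (hij : i ≠ j) (x y : Fin 3 → Z) (a b c : Z) :
    pt k i j x a b c = pt k i j y a b c := by
  funext t
  rcases fin3 hki hkj hij t with rfl | rfl | rfl <;> simp [pt]

lemma listed_three {f : (Fin 3 → Z) → Z} (ess : ∀ t, essentialAt f t)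
    (cond : ∀ i j, i ≠ j → T2 f i j ∨ ∃ k, k ≠ i ∧ k ≠ j ∧ T1 f i j k) : Listed f := by
  by_cases hall : ∀ i j, i ≠ j → T2 f i j
  · obtain ⟨c, hc⟩ := affine le_rfl ess hall
    exact ⟨c, Or.inl ⟨3, by norm_num, FnEquiv.of_perm id Function.injective_id hc⟩⟩
  push Not at hall
  obtain ⟨i, j, hij, hT⟩ := hall
  obtain ⟨k, hki, hkj, h⟩ := (cond i j hij).resolve_left hT
  have hinj : Function.Injective ![i, j, k] := by
    revert hki hkj hij; clear * -; revert i j k; decide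
  have hM : MA f k i j ∨ MB f k i j := by
    rcases cond k j hkj with h2 | ⟨m, hmk, hmj, h2⟩
    · exact Or.inl (caseA hki hkj hij ess cond h h2)
    · rcases fin3 hki hkj hij m with e | e | e
      · exact absurd e hmk
      · subst e
        exact Or.inr (caseB hki hkj hij ess cond h h2)
      · exact absurd e hmj
  have hne : f (pt k i j 0 0 0 0) ≠ f (pt k i j 0 1 1 1) := by
    intro e
    apply kcontra hki hkj (ess k)
    intro x b c
    rw [pt3 hki hkj hij x 0, pt3 hki hkj hij x 0]
    rcases hM with h | h
    all_goals
      have hx := h 0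
      simp only at hx
      rcases z01 b with rfl | rfl <;> rcases z01 c with rfl | rfl <;> grind
  have hx' : ∀ x, f x = f (pt k i j 0 (x k) (x i) (x j)) := by
    intro x
    rw [pt3 hki hkj hij 0 x, pt_self]
  have h10 : f (pt k i j 0 1 1 1) = f (pt k i j 0 0 0 0) + 1 := by
    revert hne
    generalize f (pt k i j 0 0 0 0) = a
    generalize f (pt k i j 0 1 1 1) = b
    revert a b; decide
  have two : (1 : Z) + 1 = 0 := by decide
  rcases hM with h | h
  · refine ⟨f (pt k i j 0 0 0 0), Or.inr (Or.inr (Or.inr (FnEquiv.of_perm _ hinj ?_)))⟩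
    intro x
    rw [hx' x]
    obtain ⟨a1, a2, a3, a4, a5, a6⟩ := h 0
    rcases z01 (x k) with e1 | e1 <;> rcases z01 (x i) with e2 | e2 <;>
      rcases z01 (x j) with e3 | e3 <;> simp [e1, e2, e3, a1, a2, a3, a4, a5, a6, h10] <;>
      generalize f (pt k i j 0 0 0 0) = a <;> revert a <;> decide
  · refine ⟨f (pt k i j 0 0 0 0), Or.inr (Or.inr (Or.inl (FnEquiv.of_perm _ hinj ?_)))⟩
    intro x
    rw [hx' x]
    obtain ⟨a1, a2, a3, a4, a5, a6⟩ := h 0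
    rcases z01 (x k) with e1 | e1 <;> rcases z01 (x i) with e2 | e2 <;>
      rcases z01 (x j) with e3 | e3 <;> simp [e1, e2, e3, a1, a2, a3, a4, a5, a6, h10] <;>
      generalize f (pt k i j 0 0 0 0) = a <;> revert a <;> decide

lemma essArity_full {n : ℕ} {f : (Fin n → Z) → Z} (ess : ∀ t, essentialAt f t) :
    essArity f = n := by
  classical
  rw [essArity_eq, Finset.filter_true_of_mem (fun t _ => ess t)]
  simp

/-- full functions: gap positive, and gap not one implies listed -/
lemma full_case {n : ℕ} {f : (Fin n → Z) → Z} (hn : 2 ≤ n) (ess : ∀ t, essentialAt f t) :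
    arityGap f = 1 ∨ Listed f := by
  classical
  by_cases h1 : arityGap f = 1
  · exact Or.inl h1
  right
  have hfull := essArity_full ess
  have hle : ∀ i j : Fin n, i ≠ j → essArity (idMinor f i j) + 1 ≤ n := by
    intro i j hij
    rw [essArity_eq]
    have : (Finset.univ.filter (essentialAt (idMinor f i j))) ⊆ Finset.univ.erase i := by
      intro t ht
      simp at ht ⊢
      rintro rfl
      exact not_ess_minor hij ht
    have := Finset.card_le_card this
    rw [Finset.card_erase_of_mem (Finset.mem_univ i)] at this
    simp only [Finset.card_univ, Fintype.card_fin] at this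
    omega
  have hex : ∃ d, d ∈ {d : ℕ | ∃ i j : Fin n, i ≠ j ∧ essentialAt f i ∧ essentialAt f j ∧
    d = essArity f - essArity (idMinor f i j)} :=
    ⟨_, ⟨0, by omega⟩, ⟨1, by omega⟩, by simp, ess _, ess _, rfl⟩
  have hmem := Nat.sInf_mem hex
  have hpos : 1 ≤ arityGap f := by
    obtain ⟨i, j, hij, -, -, hd⟩ := hmem
    have := hle i j hij
    unfold arityGap
    rw [hd]
    omega
  have hle2 : ∀ i j : Fin n, i ≠ j → essArity (idMinor f i j) + 2 ≤ n := by
    intro i j hij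
    have h2 : arityGap f ≤ essArity f - essArity (idMinor f i j) :=
      Nat.sInf_le ⟨i, j, hij, ess i, ess j, rfl⟩
    omega
  have cond : ∀ i j, i ≠ j → T2 f i j ∨ ∃ k, k ≠ i ∧ k ≠ j ∧ T1 f i j k := by
    intro i j hij
    obtain ⟨k, hki, hk⟩ : ∃ k, k ≠ i ∧ ¬ essentialAt (idMinor f i j) k := by
      by_contra hcon
      push Not at hcon
      have hsub : Finset.univ.erase i ⊆ (Finset.univ.filter (essentialAt (idMinor f i j))) := by
        intro t ht
        simp at ht ⊢
        exact hcon t ht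
      have := Finset.card_le_card hsub
      rw [Finset.card_erase_of_mem (Finset.mem_univ i), ← essArity_eq] at this
      simp only [Finset.card_univ, Fintype.card_fin] at this
      have := hle2 i j hij
      omega
    have self : ∀ x : Fin n → Z, x i = x j → idMinor f i j x = f x := by
      intro x hx
      unfold idMinor
      rw [← hx, Function.update_eq_self]
    by_cases hkj : k = j
    · subst hkj
      left
      intro x y hxy hx hy
      rw [← self x hx, ← self y hy]
      have e1 : idMinor f i k y = idMinor f i k (Function.update y i (x i)) := by
        by_contra hne
        exact not_ess_minor hij ⟨_, _, fun t ht => by simp [ht], hne⟩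
      rw [e1]
      by_contra hne
      refine hk ⟨_, _, fun t ht => ?_, hne⟩
      by_cases e : t = i
      · subst e; simp
      · simp [e, hxy t e ht]
    · right
      refine ⟨k, hki, hkj, ?_⟩
      intro x y hxy hx
      have hy : y i = y j := by rw [← hxy i (Ne.symm hki), ← hxy j (Ne.symm hkj), hx]
      rw [← self x hx, ← self y hy]
      by_contra hne
      exact hk ⟨x, y, hxy, hne⟩
  rcases Nat.lt_or_ge n 4 with h4 | h4
  · have : n = 2 ∨ n = 3 := by omega
    rcases this with rfl | rfl
    · apply listed_two ess
      rcases cond 0 1 (by decide) with h | ⟨k, h0, h1, -⟩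
      · exact h
      · fin_cases k <;> simp_all
    · exact listed_three ess cond
  · obtain ⟨c, hc⟩ := affine (by omega) ess (allT2 h4 ess cond)
    exact ⟨c, Or.inl ⟨n, hn, FnEquiv.of_perm id Function.injective_id hc⟩⟩

/-! Invariance under injective relabelling. -/

section inv

variable {n m : ℕ} {f : (Fin n → Z) → Z} {g : (Fin m → Z) → Z} {τ : Fin m → Fin n}

lemma ess_iff (hτ : Function.Injective τ) (h : ∀ x, f x = g (x ∘ τ)) (i : Fin n) :
    essentialAt f i ↔ ∃ a, τ a = i ∧ essentialAt g a := by
  classical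
  constructor
  · rintro ⟨x, y, hxy, hne⟩
    rw [h, h] at hne
    by_cases hi : ∃ a, τ a = i
    · obtain ⟨a, rfl⟩ := hi
      exact ⟨a, rfl, x ∘ τ, y ∘ τ, fun k hk => hxy _ (fun e => hk (hτ e)), hne⟩
    · exfalso
      apply hne
      congr 1
      funext t
      exact hxy _ (fun e => hi ⟨t, e⟩)
  · rintro ⟨a, rfl, x, y, hxy, hne⟩
    refine ⟨Function.extend τ x 0, Function.extend τ y 0, ?_, ?_⟩
    · intro k hk
      by_cases hi : ∃ b, τ b = k
      · obtain ⟨b, rfl⟩ := hi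
        rw [hτ.extend_apply, hτ.extend_apply]
        exact hxy b (fun e => hk (by rw [e]))
      · rw [Function.extend_apply' _ _ _ hi, Function.extend_apply' _ _ _ hi]
    · rw [h, h, Function.extend_comp hτ, Function.extend_comp hτ]
      exact hne

lemma arity_inv (hτ : Function.Injective τ) (h : ∀ x, f x = g (x ∘ τ)) :
    essArity f = essArity g := by
  classical
  rw [essArity_eq, essArity_eq, ← Finset.card_image_of_injective _ hτ]
  congr 1
  ext i
  simp only [Finset.mem_filter, Finset.mem_univ, true_and, Finset.mem_image]
  rw [ess_iff hτ h]
  exact ⟨fun ⟨a, h1, h2⟩ => ⟨a, h2, h1⟩, fun ⟨a, h1, h2⟩ => ⟨a, h2, h1⟩⟩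

lemma minor_inv (hτ : Function.Injective τ) (h : ∀ x, f x = g (x ∘ τ)) (a b : Fin m) :
    ∀ x, idMinor f (τ a) (τ b) x = idMinor g a b (x ∘ τ) := by
  intro x
  unfold idMinor
  rw [h]
  congr 1
  funext t
  by_cases e : t = a
  · subst e; simp
  · simp [e, hτ.ne e]

lemma gap_inv (hτ : Function.Injective τ) (h : ∀ x, f x = g (x ∘ τ)) :
    arityGap f = arityGap g := by
  unfold arityGap
  congr 1
  ext d
  constructor
  · rintro ⟨i, j, hij, hi, hj, hd⟩
    obtain ⟨a, rfl, ha⟩ := (ess_iff hτ h i).mp hi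
    obtain ⟨b, rfl, hb⟩ := (ess_iff hτ h j).mp hj
    refine ⟨a, b, fun e => hij (by rw [e]), ha, hb, ?_⟩
    rw [hd, arity_inv hτ h, arity_inv hτ (minor_inv hτ h a b)]
  · rintro ⟨a, b, hab, ha, hb, hd⟩
    refine ⟨τ a, τ b, hτ.ne hab, (ess_iff hτ h _).mpr ⟨a, rfl, ha⟩,
      (ess_iff hτ h _).mpr ⟨b, rfl, hb⟩, ?_⟩
    rw [hd, arity_inv hτ h, arity_inv hτ (minor_inv hτ h a b)]

end inv

lemma gap_equiv {n m : ℕ} {f : (Fin n → Z) → Z} {g : (Fin m → Z) → Z}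
    (ess : ∀ t, essentialAt g t) (h : FnEquiv f g) : arityGap f = arityGap g := by
  obtain ⟨⟨s, hs⟩, ⟨t, ht⟩⟩ := h
  refine gap_inv (τ := t) ?_ ht
  have hsurj : Function.Surjective (s ∘ t) := by
    intro a
    by_contra hcon
    obtain ⟨x, y, hxy, hne⟩ := ess a
    apply hne
    rw [hs, hs, ht, ht]
    congr 1
    funext b
    exact hxy _ (fun e => hcon ⟨b, e⟩)
  exact (Finite.injective_iff_surjective.mpr hsurj).of_comp

/-- reduction to functions with all variables essential -/
lemma reduce {n : ℕ} (f : (Fin n → Z) → Z) (hf : 2 ≤ essArity f) :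
    ∃ (m : ℕ) (g : (Fin m → Z) → Z), 2 ≤ m ∧ (∀ t, essentialAt g t) ∧ FnEquiv f g := by
  classical
  let e : {i : Fin n // essentialAt f i} ≃ Fin (essArity f) := Finite.equivFin _
  let s : Fin n → Fin (essArity f) :=
    fun t => if h : essentialAt f t then e ⟨t, h⟩ else ⟨0, by omega⟩
  let τ : Fin (essArity f) → Fin n := fun a => (e.symm a).1
  have hτ : Function.Injective τ := fun a b h => e.symm.injective (Subtype.ext h)
  have hst : ∀ i, essentialAt f i → τ (s i) = i := by
    intro i hi
    simp [τ, s, hi]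
  have hfg : ∀ x, f x = f ((x ∘ τ) ∘ s) := by
    intro x
    apply agree f (Finset.univ.filter fun i => ¬ essentialAt f i)
    · intro i hi; simpa using hi
    · intro i hi
      simp at hi
      simp [hst i hi]
  refine ⟨essArity f, fun y => f (y ∘ s), hf, ?_, ⟨⟨s, fun _ => rfl⟩, ⟨τ, hfg⟩⟩⟩
  intro a
  have h1 : essentialAt f (τ a) := (e.symm a).2
  obtain ⟨b, hb, hb'⟩ := (ess_iff (g := fun y => f (y ∘ s)) hτ hfg (τ a)).mp h1
  rwa [← hτ hb]

lemma gap_two_of {n : ℕ} {f : (Fin n → Z) → Z} (hn : 2 ≤ n) (ess : ∀ t, essentialAt f t)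
    (h : ∀ i j : Fin n, i ≠ j → essArity (idMinor f i j) + 2 = n) : arityGap f = 2 := by
  have hs : {d : ℕ | ∃ i j : Fin n, i ≠ j ∧ essentialAt f i ∧ essentialAt f j ∧
    d = essArity f - essArity (idMinor f i j)} = {2} := by
    ext d
    simp only [Set.mem_setOf_eq, Set.mem_singleton_iff]
    constructor
    · rintro ⟨i, j, hij, -, -, hd⟩
      have := h i j hij
      rw [essArity_full ess] at hd
      omega
    · rintro rfl
      have hne : (⟨0, by omega⟩ : Fin n) ≠ ⟨1, by omega⟩ := by simp
      refine ⟨_, _, hne, ess _, ess _, ?_⟩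
      have := h _ _ hne
      rw [essArity_full ess]
      omega
  unfold arityGap
  rw [hs]
  simp

instance decEss {n : ℕ} (f : (Fin n → Z) → Z) : DecidablePred (essentialAt f) := fun i =>
  decidable_of_iff (∃ x x' : Fin n → Z, (∀ k, k ≠ i → x k = x' k) ∧ f x ≠ f x') Iff.rfl

lemma sum_upd {m : ℕ} (x : Fin m → Z) (i : Fin m) (a : Z) :
    ∑ t, Function.update x i a t = ∑ t, x t + x i + a := by
  rw [Finset.sum_update_of_mem (Finset.mem_univ i), ← Finset.add_sum_erase _ x (Finset.mem_univ i),
    Finset.sdiff_singleton_eq_erase]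
  generalize ∑ t ∈ Finset.univ.erase i, x t = s
  generalize x i = b
  revert a b s; decide

lemma gap_sum (m : ℕ) (hm : 2 ≤ m) (c : Z) :
    (∀ t, essentialAt (fun x : Fin m → Z => (∑ i, x i) + c) t) ∧
    arityGap (fun x : Fin m → Z => (∑ i, x i) + c) = 2 := by
  have ess : ∀ t, essentialAt (fun x : Fin m → Z => (∑ i, x i) + c) t := by
    intro t
    refine ⟨0, Function.update 0 t 1, fun k hk => by simp [hk], ?_⟩
    simp only [sum_upd]
    simp
  refine ⟨ess, gap_two_of hm ess ?_⟩
  intro i j hij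
  have hminor : ∀ x : Fin m → Z, idMinor (fun x : Fin m → Z => (∑ i, x i) + c) i j x
      = ∑ t, x t + x i + x j + c := by
    intro x; simp only [idMinor, sum_upd]
  have key : (Finset.univ.filter (essentialAt (idMinor (fun x : Fin m → Z => (∑ i, x i) + c) i j)))
      = (Finset.univ.erase i).erase j := by
    ext k
    simp only [Finset.mem_filter, Finset.mem_univ, true_and, Finset.mem_erase, and_true]
    constructor
    · intro hk
      refine ⟨?_, ?_⟩
      · rintro rfl
        obtain ⟨x, y, hxy, hne⟩ := hk
        apply hne
        have : y = Function.update x k (y k) := by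
          funext t
          by_cases e : t = k
          · subst e; simp
          · simp [e, hxy t e]
        rw [this, hminor, hminor, sum_upd]
        simp only [Function.update_self, Function.update_of_ne hij]
        generalize ∑ t, x t = s
        generalize x k = p
        generalize y k = q
        generalize x i = r
        clear * -
        revert s p q r c; decide
      · rintro rfl
        exact not_ess_minor hij hk
    · rintro ⟨h1, h2⟩
      refine ⟨0, Function.update 0 k 1, fun t ht => by simp [ht], ?_⟩
      rw [hminor, hminor, sum_upd]
      simp [Ne.symm h1, Ne.symm h2]
  rw [essArity_eq, key, Finset.card_erase_of_mem (by simp [hij.symm]),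
    Finset.card_erase_of_mem (by simp)]
  simp
  omega

lemma gap_p2 (c : Z) :
    (∀ t, essentialAt (fun x : Fin 2 → Z => x 0 * x 1 + x 0 + c) t) ∧
    arityGap (fun x : Fin 2 → Z => x 0 * x 1 + x 0 + c) = 2 := by
  have ess : ∀ t, essentialAt (fun x : Fin 2 → Z => x 0 * x 1 + x 0 + c) t := by
    revert c; decide +kernel
  refine ⟨ess, gap_two_of (by norm_num) ess ?_⟩
  intro i j hij
  rw [essArity_eq]
  revert c i j; decide +kernel

lemma gap_p3 (c : Z) :
    (∀ t, essentialAt (fun x : Fin 3 → Z => x 0 * x 1 + x 0 * x 2 + x 1 * x 2 + c) t) ∧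
    arityGap (fun x : Fin 3 → Z => x 0 * x 1 + x 0 * x 2 + x 1 * x 2 + c) = 2 := by
  have ess : ∀ t, essentialAt (fun x : Fin 3 → Z => x 0 * x 1 + x 0 * x 2 + x 1 * x 2 + c) t := by
    revert c; decide +kernel
  refine ⟨ess, gap_two_of (by norm_num) ess ?_⟩
  intro i j hij
  rw [essArity_eq]
  revert c i j; decide +kernel

lemma gap_p4 (c : Z) :
    (∀ t, essentialAt (fun x : Fin 3 → Z =>
      x 0 * x 1 + x 0 * x 2 + x 1 * x 2 + x 0 + x 1 + c) t) ∧
    arityGap (fun x : Fin 3 → Z => x 0 * x 1 + x 0 * x 2 + x 1 * x 2 + x 0 + x 1 + c) = 2 := by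
  have ess : ∀ t, essentialAt (fun x : Fin 3 → Z =>
      x 0 * x 1 + x 0 * x 2 + x 1 * x 2 + x 0 + x 1 + c) t := by
    revert c; decide +kernel
  refine ⟨ess, gap_two_of (by norm_num) ess ?_⟩
  intro i j hij
  rw [essArity_eq]
  revert c i j; decide +kernel

lemma listed_gap {n : ℕ} {f : (Fin n → Z) → Z} (h : Listed f) : arityGap f = 2 := by
  obtain ⟨c, ⟨m, hm, h1⟩ | h1 | h1 | h1⟩ := h
  · rw [gap_equiv (gap_sum m hm c).1 h1]; exact (gap_sum m hm c).2
  · rw [gap_equiv (gap_p2 c).1 h1]; exact (gap_p2 c).2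
  · rw [gap_equiv (gap_p3 c).1 h1]; exact (gap_p3 c).2
  · rw [gap_equiv (gap_p4 c).1 h1]; exact (gap_p4 c).2

lemma main {n : ℕ} (f : (Fin n → Z) → Z) (hf : 2 ≤ essArity f) :
    (arityGap f = 2 ↔ Listed f) ∧ (arityGap f = 2 ∨ arityGap f = 1) := by
  obtain ⟨m, g, hm, ess, hfg⟩ := reduce f hf
  have hg := gap_equiv ess hfg
  rcases full_case hm ess with h | h
  · rw [← hg] at h
    refine ⟨⟨fun h2 => by omega, listed_gap⟩, Or.inr h⟩
  · have hL : Listed f := Listed.congr hfg h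
    exact ⟨⟨fun _ => hL, listed_gap⟩, Or.inl (listed_gap hL)⟩

end ArityGapProof

theorem boolean_arity_gap_classification {n : ℕ} (f : (Fin n → ZMod 2) → ZMod 2)
    (hf : 2 ≤ essArity f) :
    (arityGap f = 2 ↔
      ∃ c : ZMod 2,
        (∃ m : ℕ, 2 ≤ m ∧ FnEquiv f (fun x : Fin m → ZMod 2 => (∑ i, x i) + c)) ∨
        FnEquiv f (fun x : Fin 2 → ZMod 2 => x 0 * x 1 + x 0 + c) ∨
        FnEquiv f (fun x : Fin 3 → ZMod 2 => x 0 * x 1 + x 0 * x 2 + x 1 * x 2 + c) ∨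
        FnEquiv f (fun x : Fin 3 → ZMod 2 =>
          x 0 * x 1 + x 0 * x 2 + x 1 * x 2 + x 0 + x 1 + c)) ∧
    (arityGap f = 2 ∨ arityGap f = 1) := by
  exact ArityGapProof.main f hf
end

section
/- Let A be a finite set and B an arbitrary set, and assume that f : A^n → B depends on all of its n variables and n > max(|A|, 3). If f is determined by oddsupp then gap f = 2; otherwise gap f = 1. -/
open Finset

section Willard

open Classical in
/-- The finset of essential variables. -/
noncomputable def essSet {A B : Type*} {n : ℕ} (f : (Fin n → A) → B) : Finset (Fin n) :=
  Finset.univ.filter (fun i => essentialAt f i)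

lemma mem_essSet {A B : Type*} {n : ℕ} {f : (Fin n → A) → B} {i : Fin n} :
    i ∈ essSet f ↔ essentialAt f i := by
  simp [essSet]

lemma essArity_eq {A B : Type*} {n : ℕ} (f : (Fin n → A) → B) :
    essArity f = (essSet f).card := by
  classical
  unfold essArity essSet
  rw [Nat.card_eq_fintype_card, Fintype.card_subtype]

lemma eq_of_notMem {A B : Type*} {n : ℕ} {f : (Fin n → A) → B} {i : Fin n}
    (hi : i ∉ essSet f) {x y : Fin n → A} (h : ∀ k, k ≠ i → x k = y k) : f x = f y := by
  by_contra hne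
  exact hi (mem_essSet.2 ⟨x, y, h, hne⟩)

lemma eq_of_agree {A B : Type*} {n : ℕ} {f : (Fin n → A) → B}
    {x y : Fin n → A} (h : ∀ k ∈ essSet f, x k = y k) : f x = f y := by
  classical
  have key : ∀ D : Finset (Fin n), (∀ k ∈ D, k ∉ essSet f) →
      f (fun k => if k ∈ D then y k else x k) = f x := by
    intro D
    induction D using Finset.induction_on with
    | empty => intro _; simp
    | insert a D ha ih =>
      intro hD
      rw [← ih (fun k hk => hD k (Finset.mem_insert_of_mem hk))]
      apply eq_of_notMem (hD a (Finset.mem_insert_self _ _))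
      intro k hk
      simp [hk]
  rw [← key (Finset.univ.filter (fun k => k ∉ essSet f)) (by simp)]
  congr 1
  funext k
  by_cases hk : k ∈ essSet f
  · simp [hk, h k hk]
  · simp [hk]

lemma essSet_subset_image {A B : Type*} {n : ℕ} {F G : (Fin n → A) → B} {ρ : Fin n → Fin n}
    (h : ∀ x, F x = G (x ∘ ρ)) : essSet F ⊆ (essSet G).image ρ := by
  intro s hs
  by_contra hns
  obtain ⟨x, y, hxy, hne⟩ := mem_essSet.1 hs
  apply hne
  rw [h, h]
  apply eq_of_agree
  intro t ht
  apply hxy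
  rintro rfl
  exact hns (Finset.mem_image_of_mem _ ht)

lemma bij_of {A B : Type*} {n : ℕ} {F G : (Fin n → A) → B} {ρ : Fin n → Fin n}
    (h : ∀ x, F x = G (x ∘ ρ)) (hc : (essSet G).card ≤ (essSet F).card) :
    (essSet G).image ρ = essSet F ∧ Set.InjOn ρ (essSet G) := by
  have h1 := essSet_subset_image h
  have h2 : ((essSet G).image ρ).card ≤ (essSet G).card := Finset.card_image_le
  have h3 := Finset.eq_of_subset_of_card_le h1 (by omega)
  refine ⟨h3.symm, ?_⟩
  rw [← Finset.card_image_iff]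
  have h4 := congrArg Finset.card h3
  omega

/-- Map merging `a` into `b` and `c` into `d`. -/
def mg {n : ℕ} (a b c d : Fin n) : Fin n → Fin n :=
  fun t => if t = a then b else if t = c then d else t

lemma idMinor_not_ess {A B : Type*} {n : ℕ} (f : (Fin n → A) → B) {i j : Fin n} (hij : i ≠ j) :
    i ∉ essSet (idMinor f i j) := by
  intro h
  obtain ⟨x, y, hxy, hne⟩ := mem_essSet.1 h
  apply hne
  unfold idMinor
  congr 1
  funext k
  by_cases hk : k = i
  · subst hk; simp [hxy j hij.symm]
  · simp [hk, hxy k hk]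

lemma idMinor_of_eq {A B : Type*} {n : ℕ} (f : (Fin n → A) → B) {i j : Fin n} {x : Fin n → A}
    (h : x i = x j) : idMinor f i j x = f x := by
  unfold idMinor
  rw [← h, Function.update_eq_self]

lemma rel_of {A B : Type*} {n : ℕ} {f F : (Fin n → A) → B} {i j p q a b c d : Fin n}
    (hF : ∀ x, x i = x j → f x = F x)
    (hij : mg a b c d i = mg a b c d j) (hpq : mg a b c d p = mg a b c d q)
    (ha : a ∉ essSet F) (hc : c ∉ essSet F) (x : Fin n → A) :
    F x = idMinor f p q (x ∘ mg a b c d) := by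
  rw [idMinor_of_eq f (by simp [hpq]), hF _ (by simp [hij])]
  apply eq_of_agree
  intro k hk
  have h1 : k ≠ a := by rintro rfl; exact ha hk
  have h2 : k ≠ c := by rintro rfl; exact hc hk
  simp [mg, h1, h2]

lemma dich {A B : Type*} {n : ℕ} {f F : (Fin n → A) → B} {i j p q b c d : Fin n}
    (hF : ∀ x, x i = x j → f x = F x)
    (hij : mg p b c d i = mg p b c d j) (hpq : mg p b c d p = mg p b c d q)
    (hp : p ∉ essSet F) (hc : c ∉ essSet F) (hpq' : p ≠ q) (hpc : c ≠ p) (hdp : d ≠ p) (hdc : d ≠ c)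
    (hcard : (essSet (idMinor f p q)).card ≤ (essSet F).card) :
    (∀ x, x p = x q → f x = F x) ∨
    (d ∈ essSet F ∧ ∀ x, x p = x q → f x = F (Function.update x d (x c))) := by
  have hrel := rel_of (p := p) (q := q) hF hij hpq hp hc
  obtain ⟨him, hinj⟩ := bij_of hrel hcard
  have hpG := idMinor_not_ess f hpq'
  have hρc : mg p b c d c = d := by simp [mg, hpc]
  have hρd : mg p b c d d = d := by simp [mg, hdp, hdc]
  by_cases hcG : c ∈ essSet (idMinor f p q)
  · right
    refine ⟨?_, ?_⟩
    · rw [← him]; exact Finset.mem_image.2 ⟨c, hcG, hρc⟩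
    · intro x hx
      have hdG : d ∉ essSet (idMinor f p q) := by
        intro hd
        exact hdc (hinj hd hcG (by rw [hρc, hρd]))
      rw [hrel, ← idMinor_of_eq f hx]
      apply eq_of_agree
      intro t ht
      have h1 : t ≠ p := by rintro rfl; exact hpG ht
      have h3 : t ≠ d := by rintro rfl; exact hdG ht
      by_cases h2 : t = c
      · subst h2; simp [hρc]
      · simp [mg, h1, h2, h3]
  · left
    intro x hx
    rw [hrel, ← idMinor_of_eq f hx]
    apply eq_of_agree
    intro t ht
    have h1 : t ≠ p := by rintro rfl; exact hpG ht
    have h2 : t ≠ c := by rintro rfl; exact hcG ht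
    simp [mg, h1, h2]

lemma pigeon {A : Type*} [Fintype A] {n : ℕ} (hn : Fintype.card A < n) (x : Fin n → A) :
    ∃ i j, i ≠ j ∧ x i = x j := by
  obtain ⟨i, j, h, h'⟩ := Fintype.exists_ne_map_eq_of_card_lt x (by simpa using hn)
  exact ⟨i, j, h, h'⟩

lemma exists_nonempty {A B : Type*} [Fintype A] {n : ℕ} {f : (Fin n → A) → B}
    (hn : Fintype.card A < n) (hdep : ∀ i, essentialAt f i) :
    ∃ i j, i ≠ j ∧ (essSet (idMinor f i j)).Nonempty := by
  by_contra hcon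
  push Not at hcon
  obtain ⟨x, y, -, hne⟩ := hdep ⟨0, by omega⟩
  apply hne
  set z : Fin n → A := fun _ => x ⟨0, by omega⟩
  have key : ∀ w, f w = f z := by
    intro w
    obtain ⟨i, j, hij, hw⟩ := pigeon hn w
    rw [← idMinor_of_eq f hw, ← idMinor_of_eq f (show z i = z j from rfl)]
    apply eq_of_agree
    simp [hcon i j hij]
  rw [key x, key y]

lemma ess_update {A B : Type*} {n : ℕ} {F : (Fin n → A) → B} {j : Fin n} (hj : j ∈ essSet F) :
    ∃ (y : Fin n → A) (u v : A), F (Function.update y j u) ≠ F (Function.update y j v) := by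
  obtain ⟨x, y, hxy, hne⟩ := mem_essSet.1 hj
  refine ⟨x, x j, y j, ?_⟩
  have : Function.update x j (y j) = y := by
    funext k
    by_cases hk : k = j
    · subst hk; simp
    · simp [hk, hxy k hk]
  rw [this, Function.update_eq_self]
  exact hne

lemma caseI_aux {A B : Type*} [Fintype A] {n : ℕ} {f F : (Fin n → A) → B}
    (hn : Fintype.card A < n) (hdep : ∀ i, essentialAt f i)
    (hlow : ∀ p q, p ≠ q → (essSet (idMinor f p q)).card + 2 ≤ n)
    (hmax : ∀ p q, p ≠ q → (essSet (idMinor f p q)).card ≤ (essSet F).card)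
    {i j k l : Fin n} (hij : i ≠ j) (hik : i ≠ k) (hjk : j ≠ k)
    (hli : l ≠ i) (hlj : l ≠ j) (hlk : l ≠ k)
    (hF : ∀ x, x i = x j → f x = F x) (hj : j ∈ essSet F) (hi : i ∉ essSet F) (hk : k ∉ essSet F)
    (hkl : ∀ q, q ≠ i → q ≠ j → q ≠ k → ∀ x, x k = x q → f x = F x) : False := by
  obtain ⟨y, u, v, hne⟩ := ess_update hj
  have Dkj : ∀ x, x k = x j → f x = F x := by
    rcases dich (p := k) (q := j) (b := j) (c := i) (d := j) hF (by simp only [mg]; grind (ematch := 0)) (by simp only [mg]; grind (ematch := 0))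
      hk hi hjk.symm hik hjk hij.symm (hmax _ _ hjk.symm) with h | ⟨-, h⟩
    · exact h
    · exfalso
      apply hne
      have key : ∀ w, F (Function.update y j w) = F (Function.update y j (y l)) := by
        intro w
        have h1 := h (Function.update (Function.update (Function.update y i w) k (y l)) j (y l))
          (by simp only [Function.update_apply]; grind (ematch := 0))
        rw [hkl l hli hlj hlk _ (by simp only [Function.update_apply]; grind (ematch := 0))] at h1
        calc _ = _ := ?_
          _ = _ := h1.symm
          _ = _ := ?_
        · refine eq_of_agree (f := F) ?_; intro t ht; simp only [Function.update_apply]; grind (ematch := 0)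
        · refine eq_of_agree (f := F) ?_; intro t ht; simp only [Function.update_apply]; grind (ematch := 0)
      rw [key u, key v]
  have Dki : ∀ x, x k = x i → f x = F x := by
    rcases dich (p := k) (q := i) (b := j) (c := i) (d := j) hF (by simp only [mg]; grind (ematch := 0)) (by simp only [mg]; grind (ematch := 0))
      hk hi hik.symm hik hjk hij.symm (hmax _ _ hik.symm) with h | ⟨-, h⟩
    · exact h
    · exfalso
      apply hne
      have key : ∀ w, F (Function.update y j w) = F (Function.update y j (y l)) := by
        intro w
        have h1 := h (Function.update (Function.update (Function.update y i (y l)) k (y l)) j w)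
          (by simp only [Function.update_apply]; grind (ematch := 0))
        rw [hkl l hli hlj hlk _ (by simp only [Function.update_apply]; grind (ematch := 0))] at h1
        calc _ = _ := ?_
          _ = _ := h1
          _ = _ := ?_
        · refine eq_of_agree (f := F) ?_; intro t ht; simp only [Function.update_apply]; grind (ematch := 0)
        · refine eq_of_agree (f := F) ?_; intro t ht; simp only [Function.update_apply]; grind (ematch := 0)
      rw [key u, key v]
  have Diq : ∀ q, q ≠ i → ∀ x, x i = x q → f x = F x := by
    intro q hqi
    by_cases hqj : q = j
    · rw [hqj]; exact hF
    by_cases hqk : q = k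
    · rw [hqk]; intro x hx; exact Dki x hx.symm
    rcases dich (p := i) (q := q) (b := q) (c := k) (d := j) Dkj (by simp only [mg]; grind (ematch := 0)) (by simp only [mg]; grind (ematch := 0))
      hi hk (Ne.symm hqi) hik.symm hij.symm hjk (hmax _ _ (Ne.symm hqi)) with h | ⟨-, h⟩
    · exact h
    · exfalso
      apply hne
      have key : ∀ w, F (Function.update y j w) = F (Function.update y j (y q)) := by
        intro w
        have h1 := h (Function.update (Function.update (Function.update y i (y q)) k (y q)) j w)
          (by simp only [Function.update_apply]; grind (ematch := 0))
        rw [hkl q hqi hqj hqk _ (by simp only [Function.update_apply]; grind (ematch := 0))] at h1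
        calc _ = _ := ?_
          _ = _ := h1
          _ = _ := ?_
        · refine eq_of_agree (f := F) ?_; intro t ht; simp only [Function.update_apply]; grind (ematch := 0)
        · refine eq_of_agree (f := F) ?_; intro t ht; simp only [Function.update_apply]; grind (ematch := 0)
      rw [key u, key v]
  have Dkq : ∀ q, q ≠ k → ∀ x, x k = x q → f x = F x := by
    intro q hqk
    by_cases hqi : q = i
    · rw [hqi]; exact Dki
    by_cases hqj : q = j
    · rw [hqj]; exact Dkj
    exact hkl q hqi hqj hqk
  have Dp : ∀ p q, p ≠ q → p ∉ essSet F → ∀ x, x p = x q → f x = F x := by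
    intro p q hpq hp
    by_cases hpi : p = i
    · subst hpi; exact Diq q hpq.symm
    by_cases hpk : p = k
    · subst hpk; exact Dkq q hpq.symm
    by_cases hqi : q = i
    · subst hqi; intro x hx; exact Diq p hpq x hx.symm
    by_cases hqk : q = k
    · subst hqk; intro x hx; exact Dkq p hpq x hx.symm
    rcases dich (p := p) (q := q) (b := q) (c := i) (d := k) Dki (by simp only [mg]; grind (ematch := 0)) (by simp only [mg]; grind (ematch := 0))
      hp hi hpq (Ne.symm hpi) (Ne.symm hpk) hik.symm (hmax _ _ hpq) with h | ⟨h, -⟩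
    · exact h
    · exact absurd h hk
  have Dall : ∀ p q, p ≠ q → ∀ x, x p = x q → f x = F x := by
    intro p q hpq
    by_cases hp : p ∈ essSet F
    swap
    · exact Dp p q hpq hp
    by_cases hq : q ∈ essSet F
    swap
    · intro x hx; exact Dp q p hpq.symm hq x hx.symm
    have hpi : p ≠ i := by rintro rfl; exact hi hp
    have hpk : p ≠ k := by rintro rfl; exact hk hp
    have hqi : q ≠ i := by rintro rfl; exact hi hq
    have hqk : q ≠ k := by rintro rfl; exact hk hq
    obtain ⟨w, hwp, hw⟩ : ∃ w, w ≠ p ∧ w ∉ essSet (idMinor f p q) := by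
      by_contra hcon
      push Not at hcon
      have h1 : Finset.univ.erase p ⊆ essSet (idMinor f p q) := by
        intro w hw
        exact hcon w (Finset.ne_of_mem_erase hw)
      have h2 := Finset.card_le_card h1
      have h3 := hlow p q hpq
      rw [Finset.card_erase_of_mem (Finset.mem_univ _), Finset.card_univ, Fintype.card_fin] at h2
      omega
    have hmove : ∀ x : Fin n → A, x p = x q → ∀ a, ∀ z : Fin n → A,
        z = Function.update (Function.update x w a) p (Function.update x w a q) → f x = f z := by
      intro x hx a z hz
      rw [hz]
      rw [← idMinor_of_eq f hx]
      change _ = idMinor f p q (Function.update x w a)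
      apply eq_of_notMem hw
      intro t ht
      simp [ht]
    intro x hx
    by_cases hwF : w ∈ essSet F
    · have hwi : w ≠ i := by rintro rfl; exact hi hwF
      have hwk : w ≠ k := by rintro rfl; exact hk hwF
      have h1 := (hmove x hx (x k) _ rfl).trans (Dkq w hwk _ (by simp only [Function.update_apply]; grind (ematch := 0)))
      have h2 := hmove (Function.update x i (x k)) (by simp only [Function.update_apply]; grind (ematch := 0)) (x k) _ rfl
      rw [Dki (Function.update x i (x k)) (by simp only [Function.update_apply]; grind (ematch := 0)), Dki _ (by simp only [Function.update_apply]; grind (ematch := 0))] at h2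
      rw [h1]
      calc _ = _ := ?_
        _ = _ := h2.symm
        _ = _ := ?_
      · refine eq_of_agree (f := F) ?_; intro t ht; simp only [Function.update_apply]; grind (ematch := 0)
      · refine eq_of_agree (f := F) ?_; intro t ht; simp only [Function.update_apply]; grind (ematch := 0)
    · obtain ⟨t, ht, htw, htp⟩ : ∃ t, t ∉ essSet F ∧ t ≠ w ∧ t ≠ p := by
        by_cases hwk : w = k
        · exact ⟨i, hi, by grind, by grind⟩
        · exact ⟨k, hk, by grind, by grind⟩
      have h1 := (hmove x hx (x t) _ rfl).trans (Dp w t htw.symm hwF _ (by simp only [Function.update_apply]; grind (ematch := 0)))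
      rw [h1]
      refine eq_of_agree (f := F) ?_; intro t ht; simp only [Function.update_apply]; grind (ematch := 0)
  obtain ⟨x, x', hxx, hne'⟩ := hdep i
  apply hne'
  have hall : ∀ x, f x = F x := by
    intro x
    obtain ⟨p, q, hpq, h⟩ := pigeon hn x
    exact Dall p q hpq x h
  rw [hall, hall]
  exact eq_of_notMem hi hxx

lemma caseI {A B : Type*} [Fintype A] {n : ℕ} {f : (Fin n → A) → B}
    (hn : Fintype.card A < n) (hn3 : 3 < n) (hdep : ∀ i, essentialAt f i)
    (hlow : ∀ p q, p ≠ q → (essSet (idMinor f p q)).card + 2 ≤ n)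
    {i j : Fin n} (hij : i ≠ j)
    (hmax : ∀ p q, p ≠ q → (essSet (idMinor f p q)).card ≤ (essSet (idMinor f i j)).card)
    (hj : j ∈ essSet (idMinor f i j)) : False := by
  obtain ⟨k, hki, hk⟩ : ∃ w, w ≠ i ∧ w ∉ essSet (idMinor f i j) := by
    by_contra hcon
    push Not at hcon
    have h1 : Finset.univ.erase i ⊆ essSet (idMinor f i j) := by
      intro w hw
      exact hcon w (Finset.ne_of_mem_erase hw)
    have h2 := Finset.card_le_card h1
    have h3 := hlow i j hij
    rw [Finset.card_erase_of_mem (Finset.mem_univ _), Finset.card_univ, Fintype.card_fin] at h2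
    omega
  have hkj : k ≠ j := by rintro rfl; exact hk hj
  have hi := idMinor_not_ess f hij
  have hF : ∀ x, x i = x j → f x = idMinor f i j x := fun x hx => (idMinor_of_eq f hx).symm
  generalize idMinor f i j = F at *
  obtain ⟨l, hl⟩ : ∃ l, l ∉ ({i, j, k} : Finset (Fin n)) := by
    by_contra hcon
    push Not at hcon
    have h1 : (Finset.univ : Finset (Fin n)) ⊆ {i, j, k} := fun w _ => hcon w
    have h2 := Finset.card_le_card h1
    have h3 : ({i, j, k} : Finset (Fin n)).card ≤ 3 := Finset.card_le_three
    rw [Finset.card_univ, Fintype.card_fin] at h2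
    omega
  have hli : l ≠ i := by grind
  have hlj : l ≠ j := by grind
  have hlk : l ≠ k := by grind
  have step1 : ∀ q, q ≠ i → q ≠ j → q ≠ k → (∀ x, x k = x q → f x = F x) ∨
      (∀ x, x k = x q → f x = F (Function.update x j (x i))) := by
    intro q hqi hqj hqk
    rcases dich (p := k) (q := q) (b := q) (c := i) (d := j) hF (by simp only [mg]; grind (ematch := 0)) (by simp only [mg]; grind (ematch := 0))
      hk hi hqk.symm hki.symm hkj.symm hij.symm (hmax _ _ hqk.symm) with h | ⟨-, h⟩
    · exact Or.inl h
    · exact Or.inr h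
  set F' : (Fin n → A) → B := fun x => F (Function.update x j (x i)) with hF'
  have hjF' : j ∉ essSet F' := by
    intro h
    obtain ⟨y, u, v, hne⟩ := ess_update h
    apply hne
    refine eq_of_agree (f := F) ?_; intro t ht; simp only [Function.update_apply]; grind (ematch := 0)
  have hkF' : k ∉ essSet F' := by
    intro h
    obtain ⟨y, u, v, hne⟩ := ess_update h
    apply hne
    refine eq_of_agree (f := F) ?_; intro t ht; simp only [Function.update_apply]; grind (ematch := 0)
  have hiF' : i ∈ essSet F' := by
    by_contra h
    obtain ⟨y, u, v, hne⟩ := ess_update hj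
    apply hne
    have : F' (Function.update y i u) = F' (Function.update y i v) :=
      eq_of_notMem h (by simp only [Function.update_apply]; grind (ematch := 0))
    calc _ = _ := ?_
      _ = _ := this
      _ = _ := ?_
    · refine eq_of_agree (f := F) ?_; intro t ht; simp only [Function.update_apply]; grind (ematch := 0)
    · refine eq_of_agree (f := F) ?_; intro t ht; simp only [Function.update_apply]; grind (ematch := 0)
  have hmax' : ∀ p q, p ≠ q → (essSet (idMinor f p q)).card ≤ (essSet F').card := by
    intro p q hpq
    refine (hmax p q hpq).trans ?_
    have h1 : essSet F ⊆ (essSet F').image (mg i j i j) := by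
      apply essSet_subset_image
      intro x
      refine eq_of_agree (f := F) ?_
      intro t ht
      simp only [Function.update_apply, mg, Function.comp_apply]
      grind (ematch := 0)
    exact (Finset.card_le_card h1).trans Finset.card_image_le
  have hF'D : ∀ x, x j = x i → f x = F' x := by
    intro x hx
    rw [hF x hx.symm, hF']
    simp [← hx]
  by_cases hA : ∀ q, q ≠ i → q ≠ j → q ≠ k → ∀ x, x k = x q → f x = F x
  · exact caseI_aux hn hdep hlow hmax hij hki.symm hkj.symm hli hlj hlk hF hj hi hk hA
  by_cases hB : ∀ q, q ≠ i → q ≠ j → q ≠ k → ∀ x, x k = x q → f x = F' x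
  · exact caseI_aux hn hdep hlow hmax' hij.symm hkj.symm hki.symm hlj hli hlk hF'D hiF' hjF' hkF'
      (fun q h1 h2 h3 => hB q h2 h1 h3)
  push Not at hA hB
  obtain ⟨q, hqi, hqj, hqk, hq⟩ := hA
  obtain ⟨m, hmi, hmj, hmk, hm⟩ := hB
  have hq' : ∀ x, x k = x q → f x = F' x := by
    rcases step1 q hqi hqj hqk with h | h
    · obtain ⟨x, hx1, hx2⟩ := hq
      exact absurd (h x hx1) hx2
    · exact h
  have hm' : ∀ x, x k = x m → f x = F x := by
    rcases step1 m hmi hmj hmk with h | h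
    · exact h
    · obtain ⟨x, hx1, hx2⟩ := hm
      exact absurd (h x hx1) hx2
  rcases dich (p := j) (q := q) (b := q) (c := k) (d := q) hq' (by simp only [mg]; grind (ematch := 0)) (by simp only [mg]; grind (ematch := 0))
      hjF' hkF' (Ne.symm hqj) hkj hqj hqk (hmax' _ _ (Ne.symm hqj)) with h | ⟨hqF', h⟩
  · obtain ⟨y, u, v, hne⟩ := ess_update hiF'
    apply hne
    have h1 : ∀ w, F' (Function.update y i w) = F (Function.update (Function.update (Function.update y j (y q)) k (y m)) i w) := by
      intro w
      rw [← hm' _ (by simp only [Function.update_apply]; grind (ematch := 0)), h _ (by simp only [Function.update_apply]; grind (ematch := 0))]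
      refine eq_of_agree (f := F) ?_; intro t ht; simp only [Function.update_apply]; grind (ematch := 0)
    rw [h1, h1]
    refine eq_of_agree (f := F) ?_; intro t ht; simp only [Function.update_apply]; grind (ematch := 0)
  · have hqF : q ∈ essSet F := by
      by_contra hqF
      obtain ⟨y, u, v, hne⟩ := ess_update hqF'
      apply hne
      refine eq_of_agree (f := F) ?_; intro t ht; simp only [Function.update_apply]; grind (ematch := 0)
    obtain ⟨y, u, v, hne⟩ := ess_update hqF
    apply hne
    have h1 : ∀ w, F (Function.update y q w) = F (Function.update y q (y j)) := by
      intro w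
      have h2 := h (Function.update (Function.update (Function.update y i (y j)) q (y j)) k w)
        (by simp only [Function.update_apply]; grind (ematch := 0))
      rw [hF _ (by simp only [Function.update_apply]; grind (ematch := 0))] at h2
      calc _ = _ := ?_
        _ = _ := h2.symm
        _ = _ := ?_
      · refine eq_of_agree (f := F) ?_; intro t ht; simp only [Function.update_apply]; grind (ematch := 0)
      · refine eq_of_agree (f := F) ?_; intro t ht; simp only [Function.update_apply]; grind (ematch := 0)
    rw [h1 u, h1 v]

lemma caseII {A B : Type*} [Fintype A] {n : ℕ} {f : (Fin n → A) → B}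
    (hn : Fintype.card A < n) (hn3 : 3 < n) (hdep : ∀ i, essentialAt f i)
    (hlow : ∀ p q, p ≠ q → (essSet (idMinor f p q)).card + 2 ≤ n) :
    ∀ p q, p ≠ q → q ∉ essSet (idMinor f p q) := by
  classical
  -- the pairs of maximal essential arity
  obtain ⟨i₀, j₀, hij₀, hne⟩ := exists_nonempty hn hdep
  obtain ⟨⟨a, b⟩, hab, hM⟩ := Finset.exists_max_image
    ((Finset.univ : Finset (Fin n × Fin n)).filter (fun e => e.1 ≠ e.2))
    (fun e => (essSet (idMinor f e.1 e.2)).card) ⟨(i₀, j₀), by simp [hij₀]⟩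
  simp only [Finset.mem_filter, Finset.mem_univ, true_and, Prod.forall] at hab hM
  set r := (essSet (idMinor f a b)).card with hr
  have hr1 : 1 ≤ r := (Finset.card_pos.2 hne).trans_le (hM _ _ hij₀)
  have hII : ∀ p q, p ≠ q → r ≤ (essSet (idMinor f p q)).card → q ∉ essSet (idMinor f p q) := by
    intro p q hpq h1 h2
    exact caseI hn hn3 hdep hlow hpq (fun p' q' h => (hM p' q' h).trans h1) h2
  have hrel : ∀ i j, i ≠ j → ∀ x, x i = x j → f x = idMinor f i j x :=
    fun i j _ x hx => (idMinor_of_eq f hx).symm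
  have hle : ∀ i j p q c d e g, i ≠ j → r ≤ (essSet (idMinor f i j)).card →
      mg c d e g i = mg c d e g j → mg c d e g p = mg c d e g q →
      c ∉ essSet (idMinor f i j) → e ∉ essSet (idMinor f i j) →
      essSet (idMinor f i j) ⊆ (essSet (idMinor f p q)).image (mg c d e g) := by
    intro i j p q c d e g hij hr1 h1 h2 h3 h4
    exact essSet_subset_image (rel_of (p := p) (q := q) (hrel i j hij) h1 h2 h3 h4)
  have hcardle : ∀ {i j p q c d e g : Fin n}, r ≤ (essSet (idMinor f i j)).card →
      essSet (idMinor f i j) ⊆ (essSet (idMinor f p q)).image (mg c d e g) →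
      r ≤ (essSet (idMinor f p q)).card := by
    intro i j p q c d e g h1 h2
    exact h1.trans ((Finset.card_le_card h2).trans Finset.card_image_le)
  have hfull : ∀ i j k, i ≠ j → r ≤ (essSet (idMinor f i j)).card → k ≠ i → k ≠ j →
      k ∈ essSet (idMinor f i j) := by
    intro i j k hij hrij hki hkj
    by_contra hk
    have hj := hII i j hij hrij
    have hi := idMinor_not_ess f hij
    obtain ⟨l, hl⟩ := Finset.card_pos.1 (hr1.trans hrij)
    have hlk : k ≠ l := by rintro rfl; exact hk hl
    have hli : i ≠ l := by rintro rfl; exact hi hl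
    have hlj : j ≠ l := by rintro rfl; exact hj hl
    have h1 := hle i j k l i j k l hij hrij (by simp only [mg]; grind (ematch := 0)) (by simp only [mg]; grind (ematch := 0)) hi hk
    have h2 := hII k l hlk (hcardle hrij h1)
    obtain ⟨t, ht, htl⟩ := Finset.mem_image.1 (h1 hl)
    have h3 : t ≠ k := by rintro rfl; exact idMinor_not_ess f hlk ht
    have h4 : t = l := by simp only [mg] at htl; grind (ematch := 0)
    exact h2 (h4 ▸ ht)
  have hstep : ∀ i j k, i ≠ j → r ≤ (essSet (idMinor f i j)).card → i ≠ k →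
      r ≤ (essSet (idMinor f i k)).card := by
    intro i j k hij hrij hik
    by_cases hjk : k = j
    · rw [hjk]; exact hrij
    exact hcardle hrij (hle i j i k i k j k hij hrij (by simp only [mg]; grind (ematch := 0)) (by simp only [mg]; grind (ematch := 0))
      (idMinor_not_ess f hij) (hII i j hij hrij))
  have hsymm : ∀ i j, i ≠ j → r ≤ (essSet (idMinor f i j)).card →
      r ≤ (essSet (idMinor f j i)).card := by
    intro i j hij hrij
    exact hcardle hrij (hle i j j i i j i j hij hrij (by simp only [mg]; grind (ematch := 0)) (by simp only [mg]; grind (ematch := 0))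
      (idMinor_not_ess f hij) (idMinor_not_ess f hij))
  intro p q hpq
  apply hII p q hpq
  by_cases hap : a = p
  · subst hap; exact hstep a b q hab le_rfl hpq
  · exact hstep p a q (Ne.symm hap) (hsymm a p hap (hstep a b p hab le_rfl hap)) hpq

lemma mem_oddsupp {A : Type*} [DecidableEq A] {n : ℕ} (x : Fin n → A) (a : A) :
    a ∈ oddsupp x ↔ Odd ((Finset.univ.filter fun j => x j = a).card) := by
  unfold oddsupp
  rw [Finset.mem_filter]
  constructor
  · exact fun h => h.2
  · intro h
    refine ⟨?_, h⟩
    obtain ⟨j, hj⟩ := Finset.card_pos.1 h.pos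
    exact Finset.mem_image.2 ⟨j, Finset.mem_univ _, (Finset.mem_filter.1 hj).2⟩

lemma odd_count {A : Type*} [DecidableEq A] {n : ℕ} (x : Fin n → A) {p q : Fin n} (hpq : p ≠ q)
    (hx : x p = x q) (a : A) :
    Odd ((Finset.univ.filter fun j => x j = a).card) ↔
    Odd ((((Finset.univ.erase p).erase q).filter fun j => x j = a).card) := by
  have h : (Finset.univ.filter fun j => x j = a).card =
      (if x p = a then 1 else 0) + ((if x q = a then 1 else 0) +
      (((Finset.univ.erase p).erase q).filter fun j => x j = a).card) := by
    rw [Finset.card_filter, Finset.card_filter,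
      ← Finset.add_sum_erase _ _ (Finset.mem_univ p),
      ← Finset.add_sum_erase _ _ (Finset.mem_erase.2 ⟨hpq.symm, Finset.mem_univ q⟩)]
  rw [h, ← hx]
  split_ifs
  · rw [← add_assoc, Nat.odd_add, Nat.odd_iff, Nat.even_iff, Nat.odd_iff]; omega
  · simp

lemma oddsupp_congr {A : Type*} [DecidableEq A] {n : ℕ} {x y : Fin n → A} {p q : Fin n}
    (hpq : p ≠ q) (hx : x p = x q) (hy : y p = y q) (h : ∀ k, k ≠ p → k ≠ q → x k = y k) :
    oddsupp x = oddsupp y := by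
  ext a
  rw [mem_oddsupp, mem_oddsupp, odd_count x hpq hx, odd_count y hpq hy]
  have : ((Finset.univ.erase p).erase q).filter (fun j => x j = a) =
      ((Finset.univ.erase p).erase q).filter (fun j => y j = a) := by
    apply Finset.filter_congr
    intro k hk
    simp only [Finset.mem_erase, Finset.mem_univ, and_true] at hk
    rw [h k hk.2 hk.1]
  rw [this]

lemma oddsupp_perm {A : Type*} [DecidableEq A] {n : ℕ} (x : Fin n → A)
    (σ : Equiv.Perm (Fin n)) : oddsupp (x ∘ σ) = oddsupp x := by
  ext a
  rw [mem_oddsupp, mem_oddsupp]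
  have : (Finset.univ.filter fun j => (x ∘ σ) j = a).card =
      (Finset.univ.filter fun j => x j = a).card := by
    apply Finset.card_bij (fun j _ => σ j)
    · intro j hj; simpa using hj
    · intro j _ k _ h; exact σ.injective h
    · intro j hj
      exact ⟨σ.symm j, by simpa using hj, by simp⟩
  rw [this]

lemma claimB {A B : Type*} [Fintype A] [DecidableEq A] {n : ℕ} {f : (Fin n → A) → B}
    (hn : Fintype.card A < n) (x0 : Fin n → A)
    (hB : ∀ p q, p ≠ q → q ∉ essSet (idMinor f p q)) : DeterminedByOddsupp f := by
  have move : ∀ (x y : Fin n → A) (p q : Fin n), p ≠ q → x p = x q → y p = y q →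
      (∀ k, k ≠ p → k ≠ q → x k = y k) → f x = f y := by
    intro x y p q hpq hx hy hxy
    rw [← idMinor_of_eq f hx, ← idMinor_of_eq f hy]
    apply eq_of_agree
    intro k hk
    apply hxy
    · rintro rfl; exact idMinor_not_ess f hpq hk
    · rintro rfl; exact hB _ _ hpq hk
  have swap1 : ∀ (x : Fin n → A) (p q s : Fin n), p ≠ q → p ≠ s → q ≠ s → x p = x s →
      f x = f (x ∘ Equiv.swap p q) := by
    intro x p q s hpq hps hqs hx
    rw [move x (Function.update (Function.update x p (x q)) s (x q)) p s hps hx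
      (by simp [hps]) (by intro k h1 h2; simp [h1, h2])]
    apply move _ _ q s hqs (by simp [hpq.symm, hqs])
    · rw [Function.comp_apply, Function.comp_apply, Equiv.swap_apply_right,
        Equiv.swap_apply_of_ne_of_ne hps.symm hqs.symm, hx]
    · intro k h1 h2
      by_cases hk : k = p
      · subst hk; simp [hps]
      · simp [h2, hk, Equiv.swap_apply_of_ne_of_ne hk h1]
  have swap2 : ∀ (x : Fin n → A) (p q : Fin n), p ≠ q → f x = f (x ∘ Equiv.swap p q) := by
    intro x p q hpq
    by_cases hxe : x p = x q
    · congr 1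
      funext k
      by_cases hk : k = p
      · subst hk; simp [hxe]
      by_cases hk' : k = q
      · subst hk'; simp [hxe]
      simp [Equiv.swap_apply_of_ne_of_ne hk hk']
    by_cases h1 : ∃ s, s ≠ p ∧ s ≠ q ∧ x p = x s
    · obtain ⟨s, hsp, hsq, hs⟩ := h1
      exact swap1 x p q s hpq hsp.symm hsq.symm hs
    by_cases h2 : ∃ s, s ≠ p ∧ s ≠ q ∧ x q = x s
    · obtain ⟨s, hsp, hsq, hs⟩ := h2
      rw [Equiv.swap_comm]
      exact swap1 x q p s hpq.symm hsq.symm hsp.symm hs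
    push Not at h1 h2
    obtain ⟨r, s, hrs, hx⟩ := pigeon hn x
    have hrp : r ≠ p := by
      rintro rfl
      by_cases hsq : s = q
      · subst hsq; exact hxe hx
      · exact h1 s hrs.symm hsq hx
    have hrq : r ≠ q := by
      rintro rfl
      by_cases hsp : s = p
      · subst hsp; exact hxe hx.symm
      · exact h2 s hsp hrs.symm hx
    have hsp : s ≠ p := by
      rintro rfl
      exact h1 r hrp hrq hx.symm
    have hsq : s ≠ q := by
      rintro rfl
      exact h2 r hrp hrq hx.symm
    set y := Function.update (Function.update x r (x p)) s (x p) with hy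
    have e1 : f x = f y := move x y r s hrs hx (by simp [hy, hrs])
      (by intro k h1 h2; simp [hy, h1, h2])
    have e2 : f y = f (y ∘ Equiv.swap p q) :=
      swap1 y p q s hpq hsp.symm hsq.symm (by simp [hy, hsp.symm, hrp.symm])
    rw [e1, e2]
    apply move _ _ r s hrs
    · simp [Equiv.swap_apply_of_ne_of_ne hrp hrq, Equiv.swap_apply_of_ne_of_ne hsp hsq, hy, hrs]
    · simp [Equiv.swap_apply_of_ne_of_ne hrp hrq, Equiv.swap_apply_of_ne_of_ne hsp hsq, hx]
    · intro k h1 h2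
      have h3 : Equiv.swap p q k ≠ r := by
        intro h
        apply h1
        rw [← Equiv.swap_apply_of_ne_of_ne hrp hrq] at h
        exact (Equiv.swap p q).injective h
      have h4 : Equiv.swap p q k ≠ s := by
        intro h
        apply h2
        rw [← Equiv.swap_apply_of_ne_of_ne hsp hsq] at h
        exact (Equiv.swap p q).injective h
      simp [hy, h3, h4]
  have main : ∀ m, ∀ x y : Fin n → A, (Finset.univ.filter fun k => x k ≠ y k).card ≤ m →
      oddsupp x = oddsupp y → f x = f y := by
    intro m
    induction m with
    | zero =>
      intro x y h _
      have h1 := Finset.card_eq_zero.1 (Nat.le_zero.1 h)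
      congr 1
      funext k
      by_contra hk
      have : k ∈ (Finset.univ.filter fun k => x k ≠ y k) := by simp [hk]
      rw [h1] at this
      simp at this
    | succ m ih =>
      intro x y h ho
      by_cases hxy : x = y
      · rw [hxy]
      obtain ⟨p, hp⟩ := Function.ne_iff.1 hxy
      have shrink : ∀ x' y' : Fin n → A, x' p = y' p →
          (∀ k, x k = y k → x' k = y' k) →
          (Finset.univ.filter fun k => x' k ≠ y' k).card ≤ m := by
        intro x' y' h1 h2
        have h3 : (Finset.univ.filter fun k => x' k ≠ y' k) ⊂
            (Finset.univ.filter fun k => x k ≠ y k) := by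
          rw [Finset.ssubset_iff_of_subset]
          · exact ⟨p, by simp [hp], by simp [h1]⟩
          · intro k hk
            simp only [Finset.mem_filter, Finset.mem_univ, true_and] at hk ⊢
            exact fun h => hk (h2 k h)
        have := Finset.card_lt_card h3
        omega
      by_cases hq : ∃ q, q ≠ p ∧ x q ≠ y q ∧ y q = y p
      · obtain ⟨q, hqp, hqD, hqy⟩ := hq
        set y' := Function.update (Function.update y p (x p)) q (x p) with hy'
        have e1 : y' p = y' q := by simp [hy', hqp.symm]
        have e2 : ∀ k, k ≠ p → k ≠ q → y k = y' k := by
          intro k h1 h2; simp [hy', h1, h2]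
        rw [move y y' p q hqp.symm hqy.symm e1 e2]
        apply ih
        · apply shrink
          · simp [hy', hqp.symm]
          · intro k hk
            have h1 : k ≠ p := by rintro rfl; exact hp hk
            have h2 : k ≠ q := by rintro rfl; exact hqD hk
            rw [hk, e2 k h1 h2]
        · rw [ho]; exact oddsupp_congr hqp.symm hqy.symm e1 e2
      · push Not at hq
        obtain ⟨q, hqD, hqx⟩ : ∃ q, x q ≠ y q ∧ x q = y p := by
          by_contra hcon
          push Not at hcon
          have h1 : (Finset.univ.filter fun j => x j = y p) =
              (Finset.univ.filter fun j => y j = y p).erase p := by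
            ext k
            simp only [Finset.mem_filter, Finset.mem_univ, true_and, Finset.mem_erase]
            constructor
            · intro hk
              have hk2 : x k = y k := by
                by_contra hne
                exact hcon k hne hk
              refine ⟨?_, hk2 ▸ hk⟩
              rintro rfl
              exact hp hk
            · rintro ⟨h1, h2⟩
              by_contra hne
              exact hq k h1 (fun h => hne (h.trans h2)) h2
          have h2 := congrArg (fun s => y p ∈ s) ho
          simp only [mem_oddsupp] at h2
          have hmem : p ∈ (Finset.univ.filter fun j => y j = y p) := by simp
          rw [h1, Finset.card_erase_of_mem hmem] at h2
          have hpos := Finset.card_pos.2 ⟨p, hmem⟩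
          simp only [eq_iff_iff, Nat.odd_iff] at h2
          omega
        have hqp : p ≠ q := by rintro rfl; exact hp hqx
        rw [swap2 x p q hqp]
        apply ih
        · apply shrink
          · simp [hqx]
          · intro k hk
            have h1 : k ≠ p := by rintro rfl; exact hp hk
            have h2 : k ≠ q := by rintro rfl; exact hqD hk
            simp [Equiv.swap_apply_of_ne_of_ne h1 h2, hk]
        · rw [oddsupp_perm, ho]
  classical
  refine ⟨fun s => if h : ∃ x : Fin n → A, oddsupp x = s then f h.choose else f x0, ?_⟩
  intro x
  have hex : ∃ x' : Fin n → A, oddsupp x' = oddsupp x := ⟨x, rfl⟩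
  simp only [hex, dif_pos]
  exact main _ _ _ le_rfl hex.choose_spec.symm

end Willard

theorem willard_arity_gap {A B : Type*} [Fintype A] [DecidableEq A] {n : ℕ}
    (f : (Fin n → A) → B) (hdep : ∀ i, essentialAt f i)
    (hn : max (Fintype.card A) 3 < n) :
    (DeterminedByOddsupp f → arityGap f = 2) ∧
    (¬ DeterminedByOddsupp f → arityGap f = 1) := by
  have hcA : Fintype.card A < n := lt_of_le_of_lt (le_max_left _ _) hn
  have h3 : 3 < n := lt_of_le_of_lt (le_max_right _ _) hn
  have hess : essArity f = n := by
    rw [essArity_eq]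
    have : essSet f = Finset.univ := by
      ext i; simp [mem_essSet, hdep i]
    rw [this, Finset.card_univ, Fintype.card_fin]
  have hupper : ∀ i j, i ≠ j → (essSet (idMinor f i j)).card ≤ n - 1 := by
    intro i j hij
    have h1 : essSet (idMinor f i j) ⊆ Finset.univ.erase i := by
      intro k hk
      refine Finset.mem_erase.2 ⟨?_, Finset.mem_univ _⟩
      rintro rfl
      exact idMinor_not_ess f hij hk
    have h2 := Finset.card_le_card h1
    rwa [Finset.card_erase_of_mem (Finset.mem_univ _), Finset.card_univ, Fintype.card_fin] at h2
  constructor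
  · rintro ⟨φ, hφ⟩
    have hsub : ∀ i j, i ≠ j → essSet (idMinor f i j) ⊆ (Finset.univ.erase i).erase j := by
      intro i j hij k hk
      refine Finset.mem_erase.2 ⟨?_, Finset.mem_erase.2 ⟨?_, Finset.mem_univ _⟩⟩
      · rintro rfl
        obtain ⟨x, y, hxy, hne⟩ := mem_essSet.1 hk
        apply hne
        unfold idMinor
        rw [hφ, hφ]
        congr 1
        apply oddsupp_congr hij
        · simp [hij.symm]
        · simp [hij.symm]
        · intro t h1 h2
          simp [h1, hxy t h2]
      · rintro rfl
        exact idMinor_not_ess f hij hk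
    have hcard2 : ∀ i j : Fin n, i ≠ j →
        ((Finset.univ.erase i).erase j : Finset (Fin n)).card = n - 2 := by
      intro i j hij
      rw [Finset.card_erase_of_mem (Finset.mem_erase.2 ⟨hij.symm, Finset.mem_univ _⟩),
        Finset.card_erase_of_mem (Finset.mem_univ _), Finset.card_univ, Fintype.card_fin]
      omega
    obtain ⟨i, j, hij, k, hk⟩ := exists_nonempty hcA hdep
    have heq : essSet (idMinor f i j) = (Finset.univ.erase i).erase j := by
      apply Finset.Subset.antisymm (hsub i j hij)
      intro l hl
      have hk' := hsub i j hij hk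
      simp only [Finset.mem_erase, Finset.mem_univ, and_true] at hl hk'
      obtain ⟨x, y, hxy, hne⟩ := mem_essSet.1 hk
      have hinv : ∀ z, idMinor f i j (z ∘ Equiv.swap k l) = idMinor f i j z := by
        intro z
        have : Function.update (z ∘ Equiv.swap k l) i ((z ∘ Equiv.swap k l) j) =
            Function.update z i (z j) ∘ Equiv.swap k l := by
          funext t
          by_cases ht : t = i
          · subst ht
            simp [Equiv.swap_apply_of_ne_of_ne (Ne.symm hk'.1) (Ne.symm hl.1),
              Equiv.swap_apply_of_ne_of_ne (Ne.symm hk'.2) (Ne.symm hl.2)]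
          · have h1 : Equiv.swap k l t ≠ i := by
              intro h
              apply ht
              rw [← Equiv.swap_apply_of_ne_of_ne (Ne.symm hk'.2) (Ne.symm hl.2)] at h
              exact (Equiv.swap k l).injective h
            simp [ht, h1]
        unfold idMinor
        rw [this, hφ, hφ, oddsupp_perm]
      refine mem_essSet.2 ⟨x ∘ Equiv.swap k l, y ∘ Equiv.swap k l, ?_, ?_⟩
      · intro t ht
        apply hxy
        intro h
        apply ht
        rw [Equiv.swap_apply_eq_iff] at h
        rw [h, Equiv.swap_apply_left]
      · rw [hinv, hinv]; exact hne
    have hmem : 2 ∈ {d : ℕ | ∃ i j : Fin n, i ≠ j ∧ essentialAt f i ∧ essentialAt f j ∧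
        d = essArity f - essArity (idMinor f i j)} := by
      refine ⟨i, j, hij, hdep i, hdep j, ?_⟩
      rw [hess, essArity_eq, heq, hcard2 i j hij]
      omega
    apply le_antisymm (Nat.sInf_le hmem)
    apply le_csInf ⟨2, hmem⟩
    rintro d ⟨p, q, hpq, -, -, rfl⟩
    have h4 := Finset.card_le_card (hsub p q hpq)
    rw [hcard2 p q hpq] at h4
    rw [hess, essArity_eq]
    omega
  · intro hnot
    obtain ⟨i, j, hij, hlt⟩ : ∃ i j, i ≠ j ∧ n < (essSet (idMinor f i j)).card + 2 := by
      by_contra hcon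
      push Not at hcon
      obtain ⟨x0, -⟩ := hdep ⟨0, by omega⟩
      exact hnot (claimB hcA x0 (caseII hcA h3 hdep hcon))
    have hmem : 1 ∈ {d : ℕ | ∃ i j : Fin n, i ≠ j ∧ essentialAt f i ∧ essentialAt f j ∧
        d = essArity f - essArity (idMinor f i j)} := by
      refine ⟨i, j, hij, hdep i, hdep j, ?_⟩
      have := hupper i j hij
      rw [hess, essArity_eq]
      omega
    apply le_antisymm (Nat.sInf_le hmem)
    apply le_csInf ⟨1, hmem⟩
    rintro d ⟨p, q, hpq, -, -, rfl⟩
    have := hupper p q hpq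
    rw [hess, essArity_eq]
    omega
end

section
/- Let n ≥ 4 and let f : ℤ₃ⁿ → ℤ₃ be a function depending on all of its variables. Identify each element u ∈ ℤ₃ with the singleton {u} in the Boolean group of subsets of ℤ₃ under symmetric difference ⊕. Then gap f = 2 if and only if there exist a, b, c, d ∈ ℤ₃, and these are uniquely determined by f, such that with p(x) = a·x² + b·x + c (operations in the field ℤ₃): if n ≡ 0 (mod 4), then {f(x)} = ⊕_{1≤i<j≤n} {(x_i − x_j)²·p(x_i + x_j) + d} ⊕ {d}; if n ≡ 1 (mod 4), then {f(x)} = ⊕_{1≤i<j≤n} {(x_i − x_j)²·p(x_i + x_j) + d} ⊕ ⊕_{i=1}^n {p(x_i) + d}; if n ≡ 2 (mod 4), then {f(x)} = ⊕_{1≤i<j≤n} {(x_i − x_j)²·p(x_i + x_j) + d}; if n ≡ 3 (mod 4), then {f(x)} = ⊕_{1≤i<j≤n} {(x_i − x_j)²·p(x_i + x_j) + d} ⊕ ⊕_{i=1}^n {p(x_i) + d} ⊕ {d}, for all x ∈ ℤ₃ⁿ. Otherwise gap f = 1. -/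
open Finset

/-- The embedding of `ℤ₃` into the Boolean group of subsets of `ℤ₃` under symmetric
difference, sending `u` to the singleton `{u}`. -/
def sing (u : ZMod 3) : AsBoolRing (Set (ZMod 3)) :=
  toBoolRing ({u} : Set (ZMod 3))

/-- The decomposition condition for functions `f : ℤ₃ⁿ → ℤ₃`, with parameters
`q = (a, b, c, d)` and `p(x) = a·x² + b·x + c`, expressed in the Boolean group of
subsets of `ℤ₃` under symmetric difference (which is the addition of
`AsBoolRing (Set (ZMod 3))`). -/
def z3Cond {n : ℕ} (f : (Fin n → ZMod 3) → ZMod 3)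
    (q : ZMod 3 × ZMod 3 × ZMod 3 × ZMod 3) : Prop :=
  let a := q.1; let b := q.2.1; let c := q.2.2.1; let d := q.2.2.2
  let p : ZMod 3 → ZMod 3 := fun x => a * x ^ 2 + b * x + c
  let S2 : (Fin n → ZMod 3) → AsBoolRing (Set (ZMod 3)) := fun x =>
    ∑ i : Fin n, ∑ j ∈ Finset.univ.filter (fun j : Fin n => i < j),
      sing ((x i - x j) ^ 2 * p (x i + x j) + d)
  let S1 : (Fin n → ZMod 3) → AsBoolRing (Set (ZMod 3)) := fun x =>
    ∑ i : Fin n, sing (p (x i) + d)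
  (n % 4 = 0 → ∀ x : Fin n → ZMod 3, sing (f x) = S2 x + sing d) ∧
  (n % 4 = 1 → ∀ x : Fin n → ZMod 3, sing (f x) = S2 x + S1 x) ∧
  (n % 4 = 2 → ∀ x : Fin n → ZMod 3, sing (f x) = S2 x) ∧
  (n % 4 = 3 → ∀ x : Fin n → ZMod 3, sing (f x) = S2 x + S1 x + sing d)

open Function in
/-- the minor of `f` at `i, j` does not depend on the other variable `v` -/
def NN {n : ℕ} {B : Type*} (f : (Fin n → ZMod 3) → B) (i j v : Fin n) : Prop :=
  ∀ x a, x i = x j → f (update x v a) = f x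

open Function in
/-- the minor of `f` at `i, j` does not depend on the identified variable -/
def TT {n : ℕ} {B : Type*} (f : (Fin n → ZMod 3) → B) (i j : Fin n) : Prop :=
  ∀ x a, x i = x j → f (update (update x i a) j a) = f x

open Classical in
/-- the set of other variables on which the minor does not depend -/
noncomputable def EE {n : ℕ} {B : Type*} (f : (Fin n → ZMod 3) → B) (i j : Fin n) :
    Finset (Fin n) :=
  Finset.univ.filter fun v => v ≠ i ∧ v ≠ j ∧ NN f i j v

/-- replace three coordinates -/
def u3 {n : ℕ} (i j k : Fin n) (x : Fin n → ZMod 3) (a b c : ZMod 3) : Fin n → ZMod 3 :=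
  fun m => if m = i then a else if m = j then b else if m = k then c else x m

structure Good {n : ℕ} {B : Type*} (f : (Fin n → ZMod 3) → B) (i j k : Fin n) : Prop where
  hij : i ≠ j
  hik : i ≠ k
  hjk : j ≠ k
  nn : NN f i j k
  nt : ¬ TT f i j
  mn : ∀ i' j', i' ≠ j' → ¬ TT f i' j' → (EE f i j).card ≤ (EE f i' j').card

section
variable {n : ℕ} {B : Type*} {f : (Fin n → ZMod 3) → B} {i j k l : Fin n}

theorem NN.symm {v : Fin n} (h : NN f i j v) : NN f j i v := fun x a e => h x a e.symm

theorem TT.symm (h : TT f i j) : TT f j i := by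
  intro x a e
  rw [← h x a e.symm]
  congr 1
  funext m
  simp only [Function.update_apply]
  split_ifs <;> rfl

theorem EE_symm (f : (Fin n → ZMod 3) → B) (i j : Fin n) : EE f i j = EE f j i := by
  ext v
  simp only [EE, Finset.mem_filter, Finset.mem_univ, true_and]
  exact ⟨fun h => ⟨h.2.1, h.1, h.2.2.symm⟩, fun h => ⟨h.2.1, h.1, h.2.2.symm⟩⟩

theorem Good.swap (g : Good f i j k) : Good f j i k :=
  ⟨g.hij.symm, g.hjk, g.hik, g.nn.symm, fun h => g.nt h.symm, by
    rw [EE_symm f j i]; exact g.mn⟩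

theorem mem_EE {v : Fin n} : v ∈ EE f i j ↔ v ≠ i ∧ v ≠ j ∧ NN f i j v := by
  simp [EE]

/-- from `NN` at `(i,k)` to `NN` at `(i,j)` -/
theorem Good.trans13 (g : Good f i j k) {v : Fin n} (h1 : v ≠ i) (h2 : v ≠ j)
    (h3 : v ≠ k)
    (h : NN f i k v) : NN f i j v := by
  intro x a e
  have hij := g.hij
  have hik := g.hik
  have hjk := g.hjk
  rw [← g.nn x (x i) e, ← h (Function.update x k (x i)) a (by simp [hik]),
    Function.update_comm h3.symm, g.nn _ _ (by simp [h1.symm, h2.symm, e])]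

theorem Good.ikj (g : Good f i j k) : NN f i k j ∨ TT f i k := by
  by_contra hc
  push Not at hc
  have h := g.mn i k g.hik hc.2
  have hlt : (EE f i k).card < (EE f i j).card := by
    apply Finset.card_lt_card
    refine ⟨fun v hv => ?_, fun hs => ?_⟩
    · rw [mem_EE] at hv ⊢
      have : v ≠ j := by rintro rfl; exact hc.1 hv.2.2
      exact ⟨hv.1, this, g.trans13 hv.1 this hv.2.1 hv.2.2⟩
    · have := hs (mem_EE.2 ⟨g.hik.symm, g.hjk.symm, g.nn⟩)
      rw [mem_EE] at this
      exact this.2.1 rfl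
  omega

theorem Good.jki (g : Good f i j k) : NN f j k i ∨ TT f j k := g.swap.ikj

theorem Good.kl (g : Good f i j k) (hi : l ≠ i) (hj : l ≠ j) (hk : l ≠ k) :
    NN f k l i ∨ NN f k l j ∨ TT f k l := by
  by_contra hc
  push Not at hc
  have h := g.mn k l hk.symm hc.2.2
  have hij := g.hij
  have hik := g.hik
  have hjk := g.hjk
  have hlt : (EE f k l).card < (EE f i j).card := by
    apply Finset.card_lt_card
    refine ⟨fun v hv => ?_, fun hs => ?_⟩
    · rw [mem_EE] at hv ⊢
      have h1 : v ≠ j := by rintro rfl; exact hc.2.1 hv.2.2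
      have h2 : v ≠ i := by rintro rfl; exact hc.1 hv.2.2
      refine ⟨h2, h1, ?_⟩
      intro x a e
      rw [← g.nn x (x l) e, ← hv.2.2 (Function.update x k (x l)) a (by simp [hk]),
        Function.update_comm hv.1.symm, g.nn _ _ (by simp [h1.symm, h2.symm, e])]
    · have := hs (mem_EE.2 ⟨g.hik.symm, g.hjk.symm, g.nn⟩)
      rw [mem_EE] at this
      exact this.1 rfl
  omega

/-- projection-type: both further pairs are as for a projection to `i`. -/
theorem Good.swap23 (g : Good f i j k) (h1 : NN f i k j) (h2 : TT f j k) : Good f i k j := by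
  refine ⟨g.hik, g.hij, g.hjk.symm, h1, ?_, ?_⟩
  · intro ht
    apply g.nt
    intro x a e
    have hij := g.hij
    have hik := g.hik
    have hjk := g.hjk
    have e1 := g.nn x (x i) e
    have e2 := ht (Function.update x k (x i)) a (by simp [hik])
    have e3 := h1 (Function.update (Function.update (Function.update x k (x i)) i a) k a) a
      (by simp [hik])
    have e4 := g.nn (Function.update (Function.update x i a) j a) a
      (by simp [hij])
    rw [← e4, ← e1, ← e2, ← e3]
    congr 1
    funext m
    simp only [Function.update_apply]
    split_ifs <;> rfl
  · intro i' j' h' ht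
    refine le_trans ?_ (g.mn i' j' h' ht)
    have hsub : EE f i k ⊆ insert j ((EE f i j).erase k) := by
      intro v hv
      rw [mem_EE] at hv
      rw [Finset.mem_insert, Finset.mem_erase, mem_EE]
      by_cases hvj : v = j
      · exact Or.inl hvj
      · exact Or.inr ⟨hv.2.1, hv.1, hvj, g.trans13 hv.1 hvj hv.2.1 hv.2.2⟩
    have hk : k ∈ EE f i j := mem_EE.2 ⟨g.hik.symm, g.hjk.symm, g.nn⟩
    calc (EE f i k).card ≤ _ := Finset.card_le_card hsub
      _ ≤ ((EE f i j).erase k).card + 1 := Finset.card_insert_le _ _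
      _ = (EE f i j).card := Finset.card_erase_add_one hk

/- translation to the function `F a b c x = f (u3 i j k x a b c)` -/
theorem Good.F12 (g : Good f i j k) (x) (a c c' : ZMod 3) :
    f (u3 i j k x a a c) = f (u3 i j k x a a c') := by
  have hij := g.hij
  have hik := g.hik
  have hjk := g.hjk
  rw [← g.nn (u3 i j k x a a c') c (by simp [u3])]
  congr 1
  funext m
  simp only [u3, Function.update_apply]
  grind

theorem F_NNik (hij : i ≠ j) (hik : i ≠ k) (hjk : j ≠ k) (h : NN f i k j) (x)
    (a b b' : ZMod 3) :
    f (u3 i j k x a b a) = f (u3 i j k x a b' a) := by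
  rw [← h (u3 i j k x a b' a) b (by simp only [u3]; grind)]
  congr 1
  funext m
  simp only [u3, Function.update_apply]
  grind

theorem F_TTik (hij : i ≠ j) (hik : i ≠ k) (hjk : j ≠ k) (h : TT f i k) (x)
    (a a' b : ZMod 3) :
    f (u3 i j k x a b a) = f (u3 i j k x a' b a') := by
  rw [← h (u3 i j k x a' b a') a (by simp only [u3]; grind)]
  congr 1
  funext m
  simp only [u3, Function.update_apply]
  grind

theorem F_NNjk (hij : i ≠ j) (hik : i ≠ k) (hjk : j ≠ k) (h : NN f j k i) (x)
    (a a' b : ZMod 3) :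
    f (u3 i j k x a b b) = f (u3 i j k x a' b b) := by
  rw [← h (u3 i j k x a' b b) a (by simp [u3, hij.symm, hik.symm])]
  congr 1
  funext m
  simp only [u3, Function.update_apply]
  grind

theorem F_TTjk (hij : i ≠ j) (hik : i ≠ k) (hjk : j ≠ k) (h : TT f j k) (x)
    (a b b' : ZMod 3) :
    f (u3 i j k x a b b) = f (u3 i j k x a b' b') := by
  rw [← h (u3 i j k x a b' b') b (by simp [u3, hij.symm, hik.symm])]
  congr 1
  funext m
  simp only [u3, Function.update_apply]
  grind

theorem F_NNkli (hij : i ≠ j) (hik : i ≠ k) (hjk : j ≠ k) (hi : l ≠ i) (hj : l ≠ j) (hk : l ≠ k)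
    (h : NN f k l i) (x) (a a' b : ZMod 3) :
    f (u3 i j k x a b (x l)) = f (u3 i j k x a' b (x l)) := by
  rw [← h (u3 i j k x a' b (x l)) a (by simp only [u3]; grind)]
  congr 1
  funext m
  simp only [u3, Function.update_apply]
  grind

theorem F_NNklj (hij : i ≠ j) (hik : i ≠ k) (hjk : j ≠ k) (hi : l ≠ i) (hj : l ≠ j) (hk : l ≠ k)
    (h : NN f k l j) (x) (a b b' : ZMod 3) :
    f (u3 i j k x a b (x l)) = f (u3 i j k x a b' (x l)) := by
  rw [← h (u3 i j k x a b' (x l)) b (by simp only [u3]; grind)]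
  congr 1
  funext m
  simp only [u3, Function.update_apply]
  grind

theorem F_TTkl (hij : i ≠ j) (hik : i ≠ k) (hjk : j ≠ k) (hi : l ≠ i) (hj : l ≠ j) (hk : l ≠ k)
    (h : TT f k l) (x) (a b c : ZMod 3) :
    f (u3 i j k x a b (x l)) = f (u3 i j k (Function.update x l c) a b c) := by
  rw [← h (u3 i j k x a b (x l)) c (by simp only [u3]; grind)]
  congr 1
  funext m
  simp only [u3, Function.update_apply]
  grind

theorem Good.nonconst (g : Good f i j k)
    (h : ∀ x a b, f (u3 i j k x a a a) = f (u3 i j k x b b b)) : False := by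
  apply g.nt
  intro x a e
  have hij := g.hij
  have hik := g.hik
  have hjk := g.hjk
  have e1 : x = u3 i j k x (x i) (x i) (x k) := by
    funext m; simp only [u3]; grind
  have e2 : Function.update (Function.update x i a) j a = u3 i j k x a a (x k) := by
    funext m; simp only [u3, Function.update_apply]; grind
  rw [e2]
  conv_rhs => rw [e1]
  rw [g.F12 x a (x k) a, g.F12 x (x i) (x k) (x i)]
  exact h _ _ _

/-- the projection type is the only possible one -/
theorem Good.proj (g : Good f i j k) (hi : l ≠ i) (hj : l ≠ j) (hk : l ≠ k) :
    (NN f i k j ∧ TT f j k) ∨ (NN f j k i ∧ TT f i k) := by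
  have hij := g.hij
  have hik := g.hik
  have hjk := g.hjk
  have c := g.F12
  rcases g.ikj with h1 | h1 <;> rcases g.jki with h2 | h2
  · -- majority
    exfalso
    have p := F_NNik hij hik hjk h1
    have q := F_NNjk hij hik hjk h2
    rcases g.kl hi hj hk with h3 | h3 | h3
    · have r := F_NNkli hij hik hjk hi hj hk h3
      have key : ∀ x a, f (u3 i j k x a a a) = f (u3 i j k x (x l) (x l) (x l)) := by
        intro x a
        rw [c x a a (x l), r x a (x l) a, p x (x l) a (x l)]
      exact g.nonconst fun x a b => (key x a).trans (key x b).symm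
    · have r := F_NNklj hij hik hjk hi hj hk h3
      have key : ∀ x a, f (u3 i j k x a a a) = f (u3 i j k x (x l) (x l) (x l)) := by
        intro x a
        rw [c x a a (x l), r x a a (x l), q x a (x l) (x l)]
      exact g.nonconst fun x a b => (key x a).trans (key x b).symm
    · have r := F_TTkl hij hik hjk hi hj hk h3
      refine g.nonconst fun x a b => ?_
      have e1 := r x a b a
      have e2 := r x a b b
      have e3 := r x a a a
      have e4 := r x b b b
      rw [p _ a b a] at e1
      rw [q _ a b b] at e2
      rw [c x a a (x l), c x b b (x l), e3, e4, ← e1, ← e2]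
  · exact Or.inl ⟨h1, h2⟩
  · exact Or.inr ⟨h2, h1⟩
  · exfalso
    have p := F_TTik hij hik hjk h1
    have q := F_TTjk hij hik hjk h2
    rcases g.kl hi hj hk with h3 | h3 | h3
    · have r := F_NNkli hij hik hjk hi hj hk h3
      refine g.nonconst fun x a b => ?_
      have e1 := r x a b (x l)
      rwa [q x a (x l) a, q x b (x l) b] at e1
    · have r := F_NNklj hij hik hjk hi hj hk h3
      refine g.nonconst fun x a b => ?_
      have e1 := r x (x l) a b
      rwa [p x (x l) a a, p x (x l) b b] at e1
    · have r := F_TTkl hij hik hjk hi hj hk h3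
      refine g.nonconst fun x a b => ?_
      have e1 := r x a b a
      have e2 := r x a b b
      have e3 := r x a a b
      have e4 := r x b b a
      rw [p _ a b b] at e1
      rw [q _ a b a] at e2
      rw [c x a a (x l), c x b b (x l), e3, e4, c _ a b a, c _ b a b, ← e1, ← e2]

theorem Good.projkl (g : Good f i j k) (h1 : NN f i k j) (h2 : TT f j k)
    (hi : l ≠ i) (hj : l ≠ j) (hk : l ≠ k) (x) (a b : ZMod 3) :
    f (u3 i j k x a b (x l)) = f (u3 i j k x a a a) := by
  have hij := g.hij
  have hik := g.hik
  have hjk := g.hjk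
  have c := g.F12
  have p := F_NNik hij hik hjk h1
  have q := F_TTjk hij hik hjk h2
  rcases g.kl hi hj hk with h3 | h3 | h3
  · have r := F_NNkli hij hik hjk hi hj hk h3
    exfalso
    refine g.nonconst fun x a b => ?_
    have e1 := r x a b (x l)
    rwa [q x a (x l) a, q x b (x l) b] at e1
  · have r := F_NNklj hij hik hjk hi hj hk h3
    rw [r x a b a, c x a (x l) a]
  · have r := F_TTkl hij hik hjk hi hj hk h3
    rw [r x a b a, p _ a b a, ← r x a a a, c x a (x l) a]

theorem u3_swap (hjk : j ≠ k) (x) (a b c : ZMod 3) : u3 i j k x a b c = u3 i k j x a c b := by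
  funext m; simp only [u3]; grind

theorem Good.final (g : Good f i j k) (h1 : NN f i k j) (h2 : TT f j k) (hn : 4 ≤ n)
    (H : ∀ i j, i ≠ j → TT f i j ∨ ∃ v, v ≠ i ∧ v ≠ j ∧ NN f i j v) (x) (a b c : ZMod 3) :
    f (u3 i j k x a b c) = f (u3 i j k x a a a) := by
  have hij := g.hij
  have hik := g.hik
  have hjk := g.hjk
  have c0 := g.F12
  have p := F_NNik hij hik hjk h1
  have q := F_TTjk hij hik hjk h2
  have g' := g.swap23 h1 h2
  have K : ∀ l, l ≠ i → l ≠ j → l ≠ k → ∀ x a b,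
      f (u3 i j k x a b (x l)) = f (u3 i j k x a a a) := fun l hi hj hk =>
    g.projkl h1 h2 hi hj hk
  have K' : ∀ l, l ≠ i → l ≠ j → l ≠ k → ∀ x a c,
      f (u3 i j k x a (x l) c) = f (u3 i j k x a a a) := fun l hi hj hk x a c => by
    rw [u3_swap hjk, u3_swap hjk]
    exact g'.projkl g.nn h2.symm hi hk hj x a c
  by_cases hab : a = b
  · subst hab; exact c0 _ _ _ _
  by_cases hac : a = c
  · subst hac; exact p _ _ _ _
  by_cases hbc : b = c
  · subst hbc; exact q _ _ _ _
  obtain ⟨l, hl⟩ : ∃ l, l ∉ ({i, j, k} : Finset (Fin n)) := by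
    by_contra hcon
    push Not at hcon
    have h3 : (Finset.univ : Finset (Fin n)).card ≤ ({i, j, k} : Finset (Fin n)).card :=
      Finset.card_le_card fun v _ => hcon v
    have h4 : ({i, j, k} : Finset (Fin n)).card ≤ 3 := Finset.card_le_three
    simp at h3
    omega
  simp only [Finset.mem_insert, Finset.mem_singleton, not_or] at hl
  obtain ⟨hi, hj, hk⟩ := hl
  by_cases hb : b = x l
  · subst hb; exact K' l hi hj hk _ _ _
  by_cases hc : c = x l
  · subst hc; exact K l hi hj hk _ _ _
  have ha : x l = a := by
    have key : ∀ a b c y : ZMod 3, a = b ∨ a = c ∨ b = c ∨ b = y ∨ c = y ∨ y = a := by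
      decide
    have := key a b c (x l)
    tauto
  -- pair `i, l`
  rcases H i l (Ne.symm hi) with h | ⟨v, hvi, hvl, h⟩
  · have r : ∀ b c a', f (u3 i j k x a b c) = f (u3 i j k (Function.update x l a') a' b c) := by
      intro b c a'
      rw [← h (u3 i j k x a b c) a' (by simp only [u3]; grind)]
      congr 1
      funext m
      simp only [u3, Function.update_apply]
      grind
    rw [r b c b, c0 _ b c b, ← r b b b, q _ a b a]
  · have hu : ∀ b c, (u3 i j k x a b c) i = (u3 i j k x a b c) l := by
      intro b c
      simp only [u3]; grind
    by_cases hvj : v = j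
    · rw [← h _ c (hu b c), ← q x a c a]
      congr 1
      funext m
      simp only [u3, Function.update_apply]
      grind
    by_cases hvk : v = k
    · rw [← h _ b (hu b c), ← q x a b a]
      congr 1
      funext m
      simp only [u3, Function.update_apply]
      grind
    have r : ∀ b c, f (u3 i j k x a b c) = f (u3 i j k (Function.update x v b) a b c) := by
      intro b' c'
      rw [← h (u3 i j k x a b' c') b' (hu _ _)]
      congr 1
      funext m
      simp only [u3, Function.update_apply]
      grind
    have s := K' v hvi hvj hvk (Function.update x v b) a
    simp only [Function.update_self] at s
    rw [r b c, s c, ← s b, ← r b b, q _ a b a]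

end

theorem key_TT {n : ℕ} {B : Type*} {f : (Fin n → ZMod 3) → B} (hn : 4 ≤ n)
    (hdep : ∀ i, essentialAt f i)
    (H : ∀ i j, i ≠ j → TT f i j ∨ ∃ v, v ≠ i ∧ v ≠ j ∧ NN f i j v) :
    ∀ i j, i ≠ j → TT f i j := by
  classical
  by_contra hc
  push Not at hc
  obtain ⟨i₀, j₀, h₀, ht₀⟩ := hc
  obtain ⟨⟨i, j⟩, hm, hmin⟩ := Finset.exists_min_image
    (Finset.univ.filter fun p : Fin n × Fin n => p.1 ≠ p.2 ∧ ¬ TT f p.1 p.2)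
    (fun p => (EE f p.1 p.2).card) ⟨(i₀, j₀), by simp [h₀, ht₀]⟩
  simp only [Finset.mem_filter, Finset.mem_univ, true_and] at hm hmin
  obtain ⟨k, hki, hkj, hk⟩ := (H i j hm.1).resolve_left hm.2
  have g : Good f i j k := ⟨hm.1, hki.symm, hkj.symm, hk, hm.2,
    fun i' j' h1 h2 => hmin (i', j') ⟨h1, h2⟩⟩
  obtain ⟨l, hl⟩ : ∃ l, l ∉ ({i, j, k} : Finset (Fin n)) := by
    by_contra hcon
    push Not at hcon
    have h3 : (Finset.univ : Finset (Fin n)).card ≤ ({i, j, k} : Finset (Fin n)).card :=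
      Finset.card_le_card fun v _ => hcon v
    have h4 : ({i, j, k} : Finset (Fin n)).card ≤ 3 := Finset.card_le_three
    simp at h3
    omega
  simp only [Finset.mem_insert, Finset.mem_singleton, not_or] at hl
  obtain ⟨hi, hj, hlk⟩ := hl
  have main : ∀ i j, Good f i j k → NN f i k j → TT f j k → False := by
    intro i j g h1 h2
    obtain ⟨x, x', hx, hne⟩ := hdep j
    apply hne
    have hij := g.hij
    have hik := g.hik
    have hjk := g.hjk
    have e1 : ∀ x : Fin n → ZMod 3, x = u3 i j k x (x i) (x j) (x k) := by
      intro x; funext m; simp only [u3]; grind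
    rw [e1 x, e1 x', g.final h1 h2 hn H x, g.final h1 h2 hn H x']
    congr 1
    funext m
    have := hx m
    have := hx i hij
    simp only [u3]; grind
  rcases g.proj hi hj hlk with h | h
  · exact main i j g h.1 h.2
  · exact main j i g.swap h.1 h.2

/-- replace four coordinates -/
def u4 {n : ℕ} (i j k l : Fin n) (x : Fin n → ZMod 3) (a b c d : ZMod 3) : Fin n → ZMod 3 :=
  fun m => if m = i then a else if m = j then b else if m = k then c else if m = l then d else x m

theorem step_abs {B : Type*} (F : ZMod 3 → ZMod 3 → ZMod 3 → ZMod 3 → B)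
    (pq : ∀ b b' a e, F b b a e = F b' b' a e)
    (pl : ∀ b b' c e, F b c b e = F b' c b' e)
    (pm : ∀ b b' c a, F b c a b = F b' c a b')
    (ql : ∀ b c c' e, F b c c e = F b c' c' e)
    (qm : ∀ b c c' a, F b c a c = F b c' a c')
    (lm : ∀ b c a a', F b c a a = F b c a' a') (b c a e : ZMod 3) :
    ∃ b' c', F b c a e = F b' c' 0 e := by
  by_cases h1 : a = b
  · subst h1; exact ⟨0, c, pl _ _ _ _⟩
  by_cases h2 : a = c
  · subst h2; exact ⟨b, 0, ql _ _ _ _⟩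
  by_cases h3 : b = c
  · subst h3; exact ⟨0, a, (pq _ a _ _).trans (pl _ _ _ _)⟩
  by_cases h4 : a = 0
  · subst h4; exact ⟨b, c, rfl⟩
  have key : ∀ a b c : ZMod 3, a = b ∨ a = c ∨ b = c ∨ a = 0 ∨ b = 0 ∨ c = 0 := by decide
  have key2 : ∀ a b c e : ZMod 3, a = b ∨ a = c ∨ b = c ∨ e = a ∨ e = b ∨ e = c := by decide
  have k1 : b = 0 ∨ c = 0 := by have := key a b c; tauto
  have k2 : e = a ∨ e = b ∨ e = c := by have := key2 a b c e; tauto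
  rcases k1 with rfl | rfl
  · refine ⟨a, c, ?_⟩
    rcases k2 with rfl | rfl | rfl
    · rw [lm 0 c e 0, pm 0 e]
    · rw [pm 0 a, lm a c a 0]
    · rw [qm 0 e a, ql 0 a 0, pq 0 a, qm a a e]
  · refine ⟨b, a, ?_⟩
    rcases k2 with rfl | rfl | rfl
    · rw [lm b 0 e 0, qm b 0 e]
    · rw [pm e a, pl a 0, pq 0 a, pm a e]
    · rw [qm b 0 a, lm b a a 0]

section
variable {n : ℕ} {B : Type*} {f : (Fin n → ZMod 3) → B}

theorem u4_facts (hT : ∀ i j, i ≠ j → TT f i j) {i j k l : Fin n}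
    (hij : i ≠ j) (hik : i ≠ k) (hil : i ≠ l) (hjk : j ≠ k) (hjl : j ≠ l) (hkl : k ≠ l) (x) :
    (∀ b b' a e, f (u4 i j k l x b b a e) = f (u4 i j k l x b' b' a e)) ∧
    (∀ b b' c e, f (u4 i j k l x b c b e) = f (u4 i j k l x b' c b' e)) ∧
    (∀ b b' c a, f (u4 i j k l x b c a b) = f (u4 i j k l x b' c a b')) ∧
    (∀ b c c' e, f (u4 i j k l x b c c e) = f (u4 i j k l x b c' c' e)) ∧
    (∀ b c c' a, f (u4 i j k l x b c a c) = f (u4 i j k l x b c' a c')) ∧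
    (∀ b c a a', f (u4 i j k l x b c a a) = f (u4 i j k l x b c a' a')) := by
  have ext4 : ∀ y z : Fin n → ZMod 3, (∀ m, y m = z m) → f y = f z :=
    fun y z h => congrArg f (funext h)
  have U : ∀ a b c d, u4 i j k l x a b c d i = a ∧ u4 i j k l x a b c d j = b ∧
      u4 i j k l x a b c d k = c ∧ u4 i j k l x a b c d l = d := by
    intro a b c d
    simp [u4, hij.symm, hik.symm, hil.symm, hjk.symm, hjl.symm, hkl.symm]
  refine ⟨?_, ?_, ?_, ?_, ?_, ?_⟩
  · intro b b' a e
    rw [← hT i j hij _ b' (by rw [(U _ _ _ _).1, (U _ _ _ _).2.1])]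
    apply ext4; intro m; simp only [u4, Function.update_apply]; grind
  · intro b b' a e
    rw [← hT i k hik _ b' (by rw [(U _ _ _ _).1, (U _ _ _ _).2.2.1])]
    apply ext4; intro m; simp only [u4, Function.update_apply]; grind
  · intro b b' a e
    rw [← hT i l hil _ b' (by rw [(U _ _ _ _).1, (U _ _ _ _).2.2.2])]
    apply ext4; intro m; simp only [u4, Function.update_apply]; grind
  · intro b c c' e
    rw [← hT j k hjk _ c' (by rw [(U _ _ _ _).2.1, (U _ _ _ _).2.2.1])]
    apply ext4; intro m; simp only [u4, Function.update_apply]; grind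
  · intro b c c' a
    rw [← hT j l hjl _ c' (by rw [(U _ _ _ _).2.1, (U _ _ _ _).2.2.2])]
    apply ext4; intro m; simp only [u4, Function.update_apply]; grind
  · intro b c a a'
    rw [← hT k l hkl _ a' (by rw [(U _ _ _ _).2.2.1, (U _ _ _ _).2.2.2])]
    apply ext4; intro m; simp only [u4, Function.update_apply]; grind

theorem exists_notMem_three (hn : 4 ≤ n) (i j k : Fin n) : ∃ l, l ≠ i ∧ l ≠ j ∧ l ≠ k := by
  by_contra hcon
  push Not at hcon
  have h3 : (Finset.univ : Finset (Fin n)).card ≤ ({i, j, k} : Finset (Fin n)).card :=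
    Finset.card_le_card fun v _ => by
      have := hcon v
      simp only [Finset.mem_insert, Finset.mem_singleton]
      tauto
  have h4 : ({i, j, k} : Finset (Fin n)).card ≤ 3 := Finset.card_le_three
  simp at h3
  omega

theorem step (hn : 4 ≤ n) (hT : ∀ i j, i ≠ j → TT f i j) {p q l : Fin n}
    (hpq : p ≠ q) (hpl : p ≠ l) (hql : q ≠ l) (x) : ∃ b c, f x = f (u3 p q l x b c 0) := by
  obtain ⟨m, hmp, hmq, hml⟩ := exists_notMem_three hn p q l
  obtain ⟨h1, h2, h3, h4, h5, h6⟩ := u4_facts hT hpq hpl hmp.symm hql hmq.symm hml.symm x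
  obtain ⟨b, c, h⟩ := step_abs (fun b c a e => f (u4 p q l m x b c a e)) h1 h2 h3 h4 h5 h6
    (x p) (x q) (x l) (x m)
  refine ⟨b, c, ?_⟩
  have e1 : x = u4 p q l m x (x p) (x q) (x l) (x m) := by
    funext t; simp only [u4]; grind
  have e2 : u3 p q l x b c 0 = u4 p q l m x b c 0 (x m) := by
    funext t; simp only [u3, u4]; grind
  rw [e2, ← h, ← e1]

/-- the representatives -/
def cc (p q : Fin n) (u v : ZMod 3) : Fin n → ZMod 3 :=
  fun m => if m = p then u else if m = q then v else 0

theorem rep (hn : 4 ≤ n) (hT : ∀ i j, i ≠ j → TT f i j) {p q : Fin n} (hpq : p ≠ q) (x) :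
    ∃ u v, f x = f (cc p q u v) := by
  suffices H : ∀ S : Finset (Fin n), p ∉ S → q ∉ S → ∀ x : Fin n → ZMod 3,
      (∀ l, l ∉ S → l ≠ p → l ≠ q → x l = 0) → ∃ u v, f x = f (cc p q u v) by
    refine H (Finset.univ.filter fun l => l ≠ p ∧ l ≠ q) (by simp) (by simp) x ?_
    intro l h1 h2 h3
    exact absurd (by simp [h2, h3]) h1
  intro S
  induction S using Finset.induction_on with
  | empty =>
    intro _ _ x hx
    refine ⟨x p, x q, congrArg f (funext fun m => ?_)⟩
    have := hx m
    simp only [cc]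
    grind
  | insert l S hl ih =>
    intro hp hq x hx
    rw [Finset.mem_insert, not_or] at hp hq
    obtain ⟨b, c, h⟩ := step hn hT hpq hp.1 hq.1 x
    rw [h]
    apply ih hp.2 hq.2
    intro t ht htp htq
    simp only [u3, if_neg htp, if_neg htq]
    split_ifs with htl
    · rfl
    · exact hx t (by simp [htl, ht]) htp htq

theorem cc_diag (hT : ∀ i j, i ≠ j → TT f i j) {p q : Fin n} (hpq : p ≠ q) (u) :
    f (cc p q u u) = f (cc p q 0 0) := by
  rw [← hT p q hpq (cc p q 0 0) u (by simp [cc])]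
  apply congrArg f
  funext m
  simp only [cc, Function.update_apply]
  grind

theorem cc_symm (hn : 4 ≤ n) (hT : ∀ i j, i ≠ j → TT f i j) {p q : Fin n} (hpq : p ≠ q) (u v) :
    f (cc p q u v) = f (cc p q v u) := by
  obtain ⟨l, hlp, hlq, -⟩ := exists_notMem_three hn p q q
  obtain ⟨m, hmp, hmq, hml⟩ := exists_notMem_three hn p q l
  obtain ⟨h1, h2, h3, h4, h5, h6⟩ :=
    u4_facts hT hpq hlp.symm hmp.symm hlq.symm hmq.symm hml.symm (fun _ => 0)
  have e : ∀ u v, cc p q u v = u4 p q l m (fun _ => 0) u v 0 0 := by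
    intro u v
    funext t
    simp only [cc, u4]
    grind
  rw [e, e, h6 u v 0 u, h2 u v v u, h4 v v u u, h6 v u u 0]

end

section
variable {n : ℕ} {f : (Fin n → ZMod 3) → ZMod 3}

theorem not_ess {B : Type*} {g : (Fin n → ZMod 3) → B} {i : Fin n} (h : ¬ essentialAt g i) (x a) :
    g (Function.update x i a) = g x := by
  by_contra hne
  exact h ⟨_, _, fun k hk => by simp [hk], hne⟩

theorem not_ess_idMinor_left {i j : Fin n} (hij : i ≠ j) : ¬ essentialAt (idMinor f i j) i := by
  rintro ⟨x, x', h, hne⟩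
  apply hne
  simp only [idMinor]
  apply congrArg f
  funext m
  have := h m
  have := h j hij.symm
  simp only [Function.update_apply]
  grind

theorem TT_of_not_ess {i j : Fin n} (hij : i ≠ j) (h : ¬ essentialAt (idMinor f i j) j) :
    TT f i j := by
  intro x a e
  have := not_ess h x a
  simp only [idMinor, Function.update_self, ← e, Function.update_eq_self] at this
  rw [← this, Function.update_comm hij]

theorem NN_of_not_ess {i j v : Fin n} (hi : v ≠ i) (hj : v ≠ j)
    (h : ¬ essentialAt (idMinor f i j) v) : NN f i j v := by
  intro x a e
  have := not_ess h x a
  simp only [idMinor, Function.update_of_ne hj.symm, ← e, Function.update_eq_self] at this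
  rw [← this, Function.update_comm hi, Function.update_eq_self]

theorem not_ess_of_TT {i j : Fin n} (hij : i ≠ j) (h : TT f i j) :
    ¬ essentialAt (idMinor f i j) j := by
  rintro ⟨x, x', hx, hne⟩
  apply hne
  simp only [idMinor]
  rw [← h (Function.update x i (x j)) (x' j) (by simp [hij.symm])]
  apply congrArg f
  funext m
  have := hx m
  simp only [Function.update_apply]
  grind

open Classical in
theorem essArity_eq_s18 {B : Type*} (g : (Fin n → ZMod 3) → B) :
    essArity g = (Finset.univ.filter fun i => essentialAt g i).card := by
  rw [essArity, Nat.card_eq_fintype_card, Fintype.card_subtype]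

theorem essArity_full (hdep : ∀ i, essentialAt f i) : essArity f = n := by
  classical
  rw [essArity_eq_s18, Finset.filter_true_of_mem fun i _ => hdep i]
  simp

theorem essArity_le {i j : Fin n} (hij : i ≠ j) : essArity (idMinor f i j) ≤ n - 1 := by
  classical
  rw [essArity_eq_s18]
  calc _ ≤ (Finset.univ.erase i).card := Finset.card_le_card fun v hv => by
        rw [Finset.mem_filter] at hv
        rw [Finset.mem_erase]
        refine ⟨?_, Finset.mem_univ _⟩
        rintro rfl
        exact not_ess_idMinor_left hij hv.2
    _ = n - 1 := by simp

theorem essArity_lt {i j : Fin n} (hij : i ≠ j) (h : essArity (idMinor f i j) ≠ n - 1) :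
    TT f i j ∨ ∃ v, v ≠ i ∧ v ≠ j ∧ NN f i j v := by
  classical
  by_contra hc
  push Not at hc
  apply h
  rw [essArity_eq_s18]
  have : (Finset.univ.filter fun v => essentialAt (idMinor f i j) v) = Finset.univ.erase i := by
    ext v
    rw [Finset.mem_filter, Finset.mem_erase]
    constructor
    · rintro ⟨-, h2⟩
      refine ⟨?_, Finset.mem_univ _⟩
      rintro rfl
      exact not_ess_idMinor_left hij h2
    · rintro ⟨h1, -⟩
      refine ⟨Finset.mem_univ _, ?_⟩
      by_contra hne
      by_cases hv : v = j
      · subst hv; exact hc.1 (TT_of_not_ess hij hne)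
      · exact hc.2 v h1 hv (NN_of_not_ess h1 hv hne)
  rw [this]
  simp

theorem gap_one (hn : 4 ≤ n) (hdep : ∀ i, essentialAt f i) (h : ¬ ∀ i j, i ≠ j → TT f i j) :
    arityGap f = 1 := by
  have hex : ∃ i j, i ≠ j ∧ essArity (idMinor f i j) = n - 1 := by
    by_contra hc
    push Not at hc
    exact h (key_TT hn hdep fun i j hij => essArity_lt hij (hc i j hij))
  obtain ⟨i, j, hij, he⟩ := hex
  refine IsLeast.csInf_eq ⟨⟨i, j, hij, hdep i, hdep j, ?_⟩, ?_⟩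
  · rw [essArity_full hdep, he]; omega
  · rintro d ⟨i, j, hij, -, -, rfl⟩
    have := essArity_le (f := f) hij
    rw [essArity_full hdep]
    omega

theorem essArity_two {i j : Fin n} (hij : i ≠ j) (h : TT f i j) :
    essArity (idMinor f i j) ≤ n - 2 := by
  classical
  rw [essArity_eq_s18]
  calc _ ≤ ((Finset.univ.erase i).erase j).card := Finset.card_le_card fun v hv => by
        rw [Finset.mem_filter] at hv
        rw [Finset.mem_erase, Finset.mem_erase]
        refine ⟨?_, ?_, Finset.mem_univ _⟩
        · rintro rfl
          exact not_ess_of_TT hij h hv.2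
        · rintro rfl
          exact not_ess_idMinor_left hij hv.2
    _ = n - 2 := by
        rw [Finset.card_erase_of_mem (by simp [hij.symm]), Finset.card_erase_of_mem (by simp)]
        simp
        omega

theorem essArity_two' {i j : Fin n} (hij : i ≠ j) (h : ∀ v, v ≠ i → v ≠ j → ¬ NN f i j v) :
    n - 2 ≤ essArity (idMinor f i j) := by
  classical
  rw [essArity_eq_s18]
  calc n - 2 = ((Finset.univ.erase i).erase j).card := by
        rw [Finset.card_erase_of_mem (by simp [hij.symm]), Finset.card_erase_of_mem (by simp)]
        simp
        omega
    _ ≤ _ := Finset.card_le_card fun v hv => by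
        rw [Finset.mem_erase, Finset.mem_erase] at hv
        rw [Finset.mem_filter]
        refine ⟨Finset.mem_univ _, ?_⟩
        by_contra hne
        exact h v hv.2.1 hv.1 (NN_of_not_ess hv.2.1 hv.1 hne)

theorem gap_two (hn : 4 ≤ n) (hdep : ∀ i, essentialAt f i) (hT : ∀ i j, i ≠ j → TT f i j) :
    arityGap f = 2 := by
  let i : Fin n := ⟨0, by omega⟩
  let j : Fin n := ⟨1, by omega⟩
  have hij : i ≠ j := by simp [i, j]
  refine IsLeast.csInf_eq ⟨⟨i, j, hij, hdep i, hdep j, ?_⟩, ?_⟩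
  · have h1 := essArity_two hij (hT i j hij)
    have h2 : n - 2 ≤ essArity (idMinor f i j) := by
      apply essArity_two' hij
      intro k hki hkj hNN
      obtain ⟨l, hli, hlj, hlk⟩ := exists_notMem_three hn i j k
      have hc : ∀ u v, f (cc k l u v) = f (cc k l 0 v) := by
        intro u v
        rw [← hNN (cc k l 0 v) u (by simp [cc, hki.symm, hkj.symm, hli.symm, hlj.symm])]
        apply congrArg f
        funext m
        simp only [cc, Function.update_apply]
        grind
      have hconst : ∀ x, f x = f (cc k l 0 0) := by
        intro x
        obtain ⟨u, v, h⟩ := rep hn hT hlk.symm x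
        rw [h, hc, cc_symm hn hT hlk.symm, hc]
      obtain ⟨x, x', -, hne⟩ := hdep i
      exact hne ((hconst x).trans (hconst x').symm)
    rw [essArity_full hdep]
    omega
  · rintro d ⟨i, j, hij, -, -, rfl⟩
    have := essArity_two hij (hT i j hij)
    rw [essArity_full hdep]
    omega

end

section
variable {V : Type*} [AddCommGroup V]

theorem TT_pairs {n : ℕ} (hV : ∀ y : V, y + y = 0) (s : ZMod 3 → ZMod 3 → V)
    (hs : ∀ a b, s a b = s b a) (hd : ∀ a b, s a a = s b b) {i j : Fin n} (hij : i ≠ j) :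
    TT (fun x : Fin n → ZMod 3 =>
      ∑ p : Fin n, ∑ q ∈ Finset.univ.filter (fun q : Fin n => p < q), s (x p) (x q)) i j := by
  intro x a e
  let P : (Fin n → ZMod 3) → Sym2 (Fin n) → V := fun x =>
    Sym2.lift ⟨fun p q => s (x p) (x q), fun p q => hs _ _⟩
  have conv : ∀ x : Fin n → ZMod 3,
      ∑ p : Fin n, ∑ q ∈ Finset.univ.filter (fun q : Fin n => p < q), s (x p) (x q)
        = ∑ e ∈ (Finset.univ : Finset (Fin n)).sym2 with ¬ e.IsDiag, P x e := by
    intro x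
    rw [Finset.sum_sym2_filter_not_isDiag]
    simp only [Finset.sum_filter]
    have : (Finset.univ : Finset (Fin n)).offDiag =
      (Finset.univ : Finset (Fin n × Fin n)).filter fun p => p.1 ≠ p.2 := by
      ext p; simp
    rw [this, Finset.sum_filter, Fintype.sum_prod_type]
    refine Finset.sum_congr rfl fun p _ => Finset.sum_congr rfl fun q _ => ?_
    by_cases h : p < q
    · simp [h, h.ne, P]
    · simp [h]
  show (∑ p : Fin n, ∑ q ∈ Finset.univ.filter (fun q : Fin n => p < q), s _ _) =
    ∑ p : Fin n, ∑ q ∈ Finset.univ.filter (fun q : Fin n => p < q), s _ _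
  rw [conv, conv]
  have neg : ∀ y z : V, y + z = 0 → y = z := by
    intro y z h
    have : y + z = z + z := by rw [h, hV]
    exact add_right_cancel this
  apply neg
  rw [← Finset.sum_add_distrib]
  set x' := Function.update (Function.update x i a) j a with hx'
  have x'i : x' i = a := by simp [x', hij]
  have x'j : x' j = a := by simp [x']
  have x'o : ∀ m, m ≠ i → m ≠ j → x' m = x m := by
    intro m h1 h2; simp [x', h1, h2]
  have xs : ∀ m, x (Equiv.swap i j m) = x m := by
    intro m
    rw [Equiv.swap_apply_def]; grind
  have xs' : ∀ m, x' (Equiv.swap i j m) = x' m := by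
    intro m
    rw [Equiv.swap_apply_def]; grind
  refine Finset.sum_involution (fun e _ => e.map (Equiv.swap i j)) ?_ ?_ ?_ ?_
  · intro e _
    induction e using Sym2.ind with
    | _ p q =>
      simp only [P, Sym2.map_mk, Sym2.lift_mk, xs, xs']
      exact hV _
  · intro e he hne hfix
    induction e using Sym2.ind with
    | _ p q =>
      apply hne
      simp only [Finset.mem_filter, Sym2.mk_isDiag_iff] at he
      simp only [P, Sym2.lift_mk]
      rw [Sym2.map_mk, Sym2.eq_iff] at hfix
      have hpq := he.2
      rcases hfix with ⟨h1, h2⟩ | ⟨h1, h2⟩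
      · have hp : p ≠ i ∧ p ≠ j := by rw [Equiv.swap_apply_def] at h1; grind
        have hq : q ≠ i ∧ q ≠ j := by rw [Equiv.swap_apply_def] at h2; grind
        rw [x'o p hp.1 hp.2, x'o q hq.1 hq.2]
        exact hV _
      · have : (p = i ∧ q = j) ∨ (p = j ∧ q = i) := by
          rw [Equiv.swap_apply_def] at h1; grind
        rcases this with ⟨rfl, rfl⟩ | ⟨rfl, rfl⟩
        · rw [x'i, x'j, e, hd a (x q)]; exact hV _
        · rw [x'i, x'j, e, hd a (x p)]; exact hV _
  · intro e he
    induction e using Sym2.ind with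
    | _ p q =>
      simp only [Finset.mem_filter, Sym2.mk_isDiag_iff, Sym2.map_mk] at he ⊢
      exact ⟨by simp, fun h => he.2 ((Equiv.swap i j).injective h)⟩
  · intro e he
    rw [Sym2.map_map]
    have : (⇑(Equiv.swap i j) ∘ ⇑(Equiv.swap i j)) = id := by funext m; simp
    rw [this, Sym2.map_id]; rfl

theorem TT_singles {n : ℕ} (hV : ∀ y : V, y + y = 0) (s : ZMod 3 → V) {i j : Fin n} (hij : i ≠ j) :
    TT (fun x : Fin n → ZMod 3 => ∑ p : Fin n, s (x p)) i j := by
  intro x a e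
  have neg : ∀ y z : V, y + z = 0 → y = z := by
    intro y z h
    have : y + z = z + z := by rw [h, hV]
    exact add_right_cancel this
  apply neg
  rw [← Finset.sum_add_distrib]
  refine Finset.sum_involution (fun e _ => Equiv.swap i j e) ?_ ?_ ?_ ?_
  · intro m _
    have h1 : x (Equiv.swap i j m) = x m := by
      rw [Equiv.swap_apply_def]; grind
    have h2 : Function.update (Function.update x i a) j a (Equiv.swap i j m) =
        Function.update (Function.update x i a) j a m := by
      simp only [Equiv.swap_apply_def, Function.update_apply]; grind
    rw [h1, h2]
    exact hV _
  · intro m _ hne hfix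
    have hp : m ≠ i ∧ m ≠ j := by rw [Equiv.swap_apply_def] at hfix; grind
    apply hne
    simp [hp.1, hp.2, hV]
  · intro m _; simp
  · intro m _; simp

theorem sum_const_pairs (m : ℕ) (D : V) :
    ∑ i : Fin m, ∑ j : Fin m, (if i < j then D else 0) = (m.choose 2) • D := by
  induction m with
  | zero => simp
  | succ m ih =>
    rw [Fin.sum_univ_succ]
    simp only [Fin.sum_univ_succ (n := m), Fin.succ_lt_succ_iff]
    simp only [lt_self_iff_false, if_false, Fin.succ_pos, if_true, Fin.not_lt_zero, zero_add, ih]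
    rw [Nat.choose_succ_succ' m 1, add_nsmul]
    simp

theorem pairs_cc (m : ℕ) (s : ZMod 3 → ZMod 3 → V) (u v : ZMod 3) :
    ∑ p : Fin (m + 2), ∑ q ∈ Finset.univ.filter (fun q : Fin (m + 2) => p < q),
      s (cc 0 1 u v p) (cc 0 1 u v q) =
    s u v + m • s u 0 + (m • s v 0 + (m.choose 2) • s 0 0) := by
  simp only [Finset.sum_filter]
  have e0 : cc (0 : Fin (m + 2)) 1 u v 0 = u := by simp [cc]
  have e1 : cc (0 : Fin (m + 2)) 1 u v (Fin.succ 0) = v := by simp [cc]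
  have e2 : ∀ t : Fin m, cc (0 : Fin (m + 2)) 1 u v t.succ.succ = 0 := by
    intro t
    have h1 : t.succ.succ ≠ (0 : Fin (m + 2)) := Fin.succ_ne_zero _
    have h2 : t.succ.succ ≠ (1 : Fin (m + 2)) := by
      rw [← Fin.succ_zero_eq_one]
      intro h
      exact Fin.succ_ne_zero _ (Fin.succ_injective _ h)
    simp [cc, h1, h2]
  have e3 := sum_const_pairs m (s 0 0)
  rw [← e3, Fin.sum_univ_succ, Fin.sum_univ_succ (n := m)]
  simp only [Fin.sum_univ_succ (n := m + 1), Fin.sum_univ_succ (n := m), Fin.succ_lt_succ_iff,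
    e0, e1, e2]
  simp

theorem singles_cc (m : ℕ) (s : ZMod 3 → V) (u v : ZMod 3) :
    ∑ p : Fin (m + 2), s (cc 0 1 u v p) = s u + (s v + m • s 0) := by
  have e0 : cc (0 : Fin (m + 2)) 1 u v 0 = u := by simp [cc]
  have e1 : cc (0 : Fin (m + 2)) 1 u v (Fin.succ 0) = v := by simp [cc]
  have e2 : ∀ t : Fin m, cc (0 : Fin (m + 2)) 1 u v t.succ.succ = 0 := by
    intro t
    have h1 : t.succ.succ ≠ (0 : Fin (m + 2)) := Fin.succ_ne_zero _
    have h2 : t.succ.succ ≠ (1 : Fin (m + 2)) := by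
      rw [← Fin.succ_zero_eq_one]
      intro h
      exact Fin.succ_ne_zero _ (Fin.succ_injective _ h)
    simp [cc, h1, h2]
  rw [Fin.sum_univ_succ, Fin.sum_univ_succ, e0, e1]
  simp only [e2]
  simp

theorem nsmul_mod_two (hV : ∀ y : V, y + y = 0) (k : ℕ) (y : V) : k • y = (k % 2) • y := by
  conv_lhs => rw [← Nat.div_add_mod k 2, add_nsmul, mul_comm, mul_nsmul', two_nsmul, hV]
  simp

end

theorem choose_two_mod (m : ℕ) : (m.choose 2) % 2 = if m % 4 < 2 then 0 else 1 := by
  induction m with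
  | zero => rfl
  | succ m ih =>
    rw [Nat.choose_succ_succ' m 1, Nat.choose_one_right]
    change (m + m.choose 2) % 2 = _
    split_ifs at ih ⊢ <;> omega

theorem sing_inj {u v : ZMod 3} (h : sing u = sing v) : u = v := by
  have h' : ({u} : Set (ZMod 3)) = {v} := toBoolRing.injective h
  exact Set.singleton_injective h'

theorem bool_add_self (y : AsBoolRing (Set (ZMod 3))) : y + y = 0 := BooleanRing.add_self y

/-- the quadratic polynomial -/
def quadP (q : ZMod 3 × ZMod 3 × ZMod 3 × ZMod 3) (x : ZMod 3) : ZMod 3 :=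
  q.1 * x ^ 2 + q.2.1 * x + q.2.2.1

/-- the pair term -/
def pairT (q : ZMod 3 × ZMod 3 × ZMod 3 × ZMod 3) (u v : ZMod 3) : AsBoolRing (Set (ZMod 3)) :=
  sing ((u - v) ^ 2 * quadP q (u + v) + q.2.2.2)

/-- the right-hand side, uniformly -/
def rhsR (n : ℕ) (q : ZMod 3 × ZMod 3 × ZMod 3 × ZMod 3) (x : Fin n → ZMod 3) :
    AsBoolRing (Set (ZMod 3)) :=
  (∑ i : Fin n, ∑ j ∈ Finset.univ.filter (fun j : Fin n => i < j), pairT q (x i) (x j)) +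
  (if n % 2 = 1 then ∑ i : Fin n, sing (quadP q (x i) + q.2.2.2) else 0) +
  (if n % 4 = 0 ∨ n % 4 = 3 then sing q.2.2.2 else 0)

theorem z3Cond_iff {n : ℕ} (f : (Fin n → ZMod 3) → ZMod 3) (q) :
    z3Cond f q ↔ ∀ x, sing (f x) = rhsR n q x := by
  have h4 : n % 4 < 4 := Nat.mod_lt _ (by norm_num)
  have h2 : n % 2 = (n % 4) % 2 := by omega
  simp only [z3Cond, rhsR, pairT, quadP, h2]
  generalize n % 4 = r at h4
  interval_cases r <;> simp

/-- the values on the representatives -/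
def valW (n : ℕ) (q : ZMod 3 × ZMod 3 × ZMod 3 × ZMod 3) (u v : ZMod 3) : ZMod 3 :=
  if n % 2 = 0 then (u - v) ^ 2 * quadP q (u + v) + q.2.2.2
  else if u = v then quadP q 0 + q.2.2.2
  else if v = 0 then quadP q u + q.2.2.2
  else if u = 0 then quadP q v + q.2.2.2
  else q.2.2.2

theorem TT_rhsR {n : ℕ} (q) {i j : Fin n} (hij : i ≠ j) : TT (rhsR n q) i j := by
  intro x a e
  have h1 := TT_pairs bool_add_self (pairT q)
    (fun a b => by simp only [pairT]; congr 1; ring_nf)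
    (fun a b => by simp [pairT]) hij x a e
  have h2 := TT_singles bool_add_self (fun y => sing (quadP q y + q.2.2.2)) hij x a e
  simp only [rhsR] at h1 h2 ⊢
  rw [h1, h2]

theorem pairT_self (q) (u : ZMod 3) : pairT q u u = sing q.2.2.2 := by simp [pairT]

theorem pairT_ne (q) {u v : ZMod 3} (h : u ≠ v) :
    pairT q u v = sing (quadP q (u + v) + q.2.2.2) := by
  have : ∀ u v : ZMod 3, u = v ∨ (u - v) ^ 2 = 1 := by decide
  simp [pairT, (this u v).resolve_left h]

theorem rhsR_cc (m : ℕ) (q) (u v : ZMod 3) :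
    rhsR (m + 2) q (cc 0 1 u v) = sing (valW (m + 2) q u v) := by
  have hV := bool_add_self
  rw [rhsR, pairs_cc m (pairT q), singles_cc m (fun y => sing (quadP q y + q.2.2.2)),
    nsmul_mod_two hV m (pairT q u 0), nsmul_mod_two hV m (pairT q v 0),
    nsmul_mod_two hV (m.choose 2), nsmul_mod_two hV m (sing _), choose_two_mod]
  have h4 : m % 4 < 4 := Nat.mod_lt _ (by norm_num)
  have h2 : m % 2 = (m % 4) % 2 := by omega
  have h3 : (m + 2) % 2 = (m % 4) % 2 := by omega
  have h5 : (m + 2) % 4 = (m % 4 + 2) % 4 := by omega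
  simp only [valW]
  rw [h2, h3, h5]
  -- the odd case
  have odd : pairT q u v + pairT q u 0 + (pairT q v 0 + sing q.2.2.2) +
      (sing (quadP q u + q.2.2.2) + (sing (quadP q v + q.2.2.2) + sing (quadP q 0 + q.2.2.2))) =
      sing (if u = v then quadP q 0 + q.2.2.2
        else if v = 0 then quadP q u + q.2.2.2
        else if u = 0 then quadP q v + q.2.2.2
        else q.2.2.2) := by
    have cancel : ∀ a b : AsBoolRing (Set (ZMod 3)), a + (a + b) = b := by
      intro a b; rw [← add_assoc, hV, zero_add]
    by_cases huv : u = v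
    · subst huv
      rw [if_pos rfl, pairT_self]
      generalize pairT q u 0 = A
      generalize sing (quadP q u + _) = C
      generalize sing (quadP q 0 + _) = E
      generalize sing _ = D
      calc _ = (D + D) + (A + A) + (C + C) + E := by abel
        _ = E := by simp only [hV, zero_add]
    rw [if_neg huv]
    by_cases hv : v = 0
    · subst hv
      rw [if_pos rfl, pairT_self]
      generalize pairT q u 0 = A
      generalize sing (quadP q u + _) = C
      generalize sing (quadP q 0 + _) = E
      generalize sing _ = D
      calc _ = (D + D) + (A + A) + (E + E) + C := by abel
        _ = C := by simp only [hV, zero_add]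
    rw [if_neg hv]
    by_cases hu : u = 0
    · subst hu
      have : pairT q 0 v = pairT q v 0 := by simp only [pairT]; congr 1; ring_nf
      rw [if_pos rfl, pairT_self, this]
      generalize pairT q v 0 = A
      generalize sing (quadP q v + _) = C
      generalize sing (quadP q 0 + _) = E
      generalize sing _ = D
      calc _ = (D + D) + (A + A) + (E + E) + C := by abel
        _ = C := by simp only [hV, zero_add]
    rw [if_neg hu, pairT_ne q huv, pairT_ne q hu, pairT_ne q hv, add_zero, add_zero]
    have hs : u + v = 0 := by
      have : ∀ u v : ZMod 3, u = v ∨ v = 0 ∨ u = 0 ∨ u + v = 0 := by decide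
      have := this u v
      tauto
    rw [hs]
    generalize sing (quadP q u + _) = C
    generalize sing (quadP q v + _) = A
    generalize sing (quadP q 0 + _) = E
    generalize sing _ = D
    calc _ = (C + C) + (A + A) + (E + E) + D := by abel
      _ = D := by simp only [hV, zero_add]

  have hD := pairT_self q 0
  generalize m % 4 = r at h4
  interval_cases r
  · simp [pairT]
  · simp [hD]
    rw [← odd]
    abel
  · simp [hD]
    rw [add_assoc, hV, add_zero, pairT]
  · simp [hD]
    rw [← odd]

theorem quad_interp (h : ZMod 3 → ZMod 3) :
    ∃ a b c : ZMod 3, ∀ x, a * x ^ 2 + b * x + c = h x := by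
  have key : ∀ h : ZMod 3 → ZMod 3,
    ∃ a b c : ZMod 3, ∀ x, a * x ^ 2 + b * x + c = h x := by decide
  exact key h

theorem quad_unique (a b c a' b' c' : ZMod 3)
    (h : ∀ x, a * x ^ 2 + b * x + c = a' * x ^ 2 + b' * x + c') : a = a' ∧ b = b' ∧ c = c' := by
  have h0 := h 0
  have h1 := h 1
  have h2 := h 2
  simp only [ne_eq, OfNat.ofNat_ne_zero, not_false_eq_true, zero_pow, mul_zero, zero_add] at h0
  subst h0
  have key : ∀ a b a' b' : ZMod 3, a * 1 ^ 2 + b * 1 = a' * 1 ^ 2 + b' * 1 →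
    a * 2 ^ 2 + b * 2 = a' * 2 ^ 2 + b' * 2 → a = a' ∧ b = b' := by decide
  obtain ⟨h3, h4⟩ := key a b a' b' (add_right_cancel h1) (add_right_cancel h2)
  exact ⟨h3, h4, rfl⟩

theorem z3_cases (P : ZMod 3 → Prop) (h0 : P 0) (h1 : P 1) (h2 : P 2) (x) : P x := by
  have : ∀ x : ZMod 3, x = 0 ∨ x = 1 ∨ x = 2 := by decide
  rcases this x with rfl | rfl | rfl <;> assumption

theorem valW_unique (n : ℕ) (q q') (h : ∀ u v, valW n q u v = valW n q' u v) : q = q' := by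
  have e1 : ((1 : ZMod 3) - 2) ^ 2 = 1 := by decide
  have e2 : (1 : ZMod 3) + 2 = 0 := by decide
  have e3 : ((0 : ZMod 3) - 1) ^ 2 = 1 := by decide
  have e4 : ((0 : ZMod 3) - 2) ^ 2 = 1 := by decide
  have e5 : (2 : ZMod 3) ^ 2 = 1 := by decide
  have n1 : (1 : ZMod 3) ≠ 2 := by decide
  have n2 : (2 : ZMod 3) ≠ 0 := by decide
  have n3 : (1 : ZMod 3) ≠ 0 := by decide
  have hd : q.2.2.2 = q'.2.2.2 ∧ ∀ x, quadP q x + q.2.2.2 = quadP q' x + q'.2.2.2 := by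
    by_cases hn : n % 2 = 0
    · refine ⟨by simpa [valW, hn] using h 0 0, z3_cases _ ?_ ?_ ?_⟩
      · simpa [valW, hn, e1, e2] using h 1 2
      · simpa [valW, hn, e3] using h 0 1
      · simpa [valW, hn, e4, e5] using h 0 2
    · refine ⟨by simpa [valW, hn, n1, n2, n3] using h 1 2, z3_cases _ ?_ ?_ ?_⟩
      · simpa [valW, hn] using h 0 0
      · simpa [valW, hn, n3] using h 1 0
      · simpa [valW, hn, n2] using h 2 0
  obtain ⟨hd, hp⟩ := hd
  obtain ⟨a, b, c, d⟩ := q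
  obtain ⟨a', b', c', d'⟩ := q'
  simp only at hd
  subst hd
  obtain ⟨rfl, rfl, rfl⟩ := quad_unique a b c a' b' c' fun x => add_right_cancel (hp x)
  rfl

theorem valW_exists (n : ℕ) (h : ZMod 3 → ZMod 3 → ZMod 3) (hs : ∀ u v, h u v = h v u)
    (hd : ∀ u, h u u = h 0 0) : ∃ q, ∀ u v, h u v = valW n q u v := by
  have e1 : ((1 : ZMod 3) - 2) ^ 2 = 1 := by decide
  have e1' : ((2 : ZMod 3) - 1) ^ 2 = 1 := by decide
  have e2 : (1 : ZMod 3) + 2 = 0 := by decide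
  have e2' : (2 : ZMod 3) + 1 = 0 := by decide
  have e3 : ((0 : ZMod 3) - 1) ^ 2 = 1 := by decide
  have e4 : ((0 : ZMod 3) - 2) ^ 2 = 1 := by decide
  have e5 : (2 : ZMod 3) ^ 2 = 1 := by decide
  have n1 : (1 : ZMod 3) ≠ 2 := by decide
  have n1' : (2 : ZMod 3) ≠ 1 := by decide
  have n2 : (2 : ZMod 3) ≠ 0 := by decide
  have n2' : (0 : ZMod 3) ≠ 2 := by decide
  have n3 : (1 : ZMod 3) ≠ 0 := by decide
  by_cases hn : n % 2 = 0
  · obtain ⟨a, b, c, hq⟩ := quad_interp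
      (fun x => (if x = 0 then h 1 2 else h 0 x) - h 0 0)
    refine ⟨(a, b, c, h 0 0), ?_⟩
    have hq' : ∀ x, quadP (a, b, c, h 0 0) x = (if x = 0 then h 1 2 else h 0 x) - h 0 0 := hq
    refine z3_cases _ (z3_cases _ ?_ ?_ ?_) (z3_cases _ ?_ ?_ ?_) (z3_cases _ ?_ ?_ ?_) <;>
      simp [valW, hn, hq', e1, e1', e2, e2', e5, n2, n3, hs 1 0, hs 2 0, hs 2 1, hd 1, hd 2]
  · obtain ⟨a, b, c, hq⟩ := quad_interp (fun x => h x 0 - h 1 2)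
    refine ⟨(a, b, c, h 1 2), ?_⟩
    have hq' : ∀ x, quadP (a, b, c, h 1 2) x = h x 0 - h 1 2 := hq
    refine z3_cases _ (z3_cases _ ?_ ?_ ?_) (z3_cases _ ?_ ?_ ?_) (z3_cases _ ?_ ?_ ?_) <;>
      simp [valW, hn, hq', n1, n1', n2, n2', n3, hs 0 1, hs 0 2, hs 2 1, hd 1, hd 2]

theorem z3Cond_TT {n : ℕ} (f : (Fin n → ZMod 3) → ZMod 3) (q) (h : z3Cond f q) :
    ∀ i j, i ≠ j → TT f i j := by
  rw [z3Cond_iff] at h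
  intro i j hij x a e
  apply sing_inj
  rw [h, h, TT_rhsR q hij x a e]

theorem z3Cond_iff_val {m : ℕ} (hn : 4 ≤ m + 2) (f : (Fin (m + 2) → ZMod 3) → ZMod 3)
    (hT : ∀ i j, i ≠ j → TT f i j) (q) :
    z3Cond f q ↔ ∀ u v, f (cc 0 1 u v) = valW (m + 2) q u v := by
  rw [z3Cond_iff]
  constructor
  · intro h u v
    apply sing_inj
    rw [h, rhsR_cc]
  · intro h x
    have hT' : ∀ i j, i ≠ j → TT (fun x => (f x, rhsR (m + 2) q x)) i j := by
      intro i j hij x a e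
      exact Prod.ext (hT i j hij x a e) (TT_rhsR q hij x a e)
    obtain ⟨u, v, huv⟩ := rep hn hT' (p := 0) (q := 1) (by simp) x
    have h1 : f x = f (cc 0 1 u v) := congrArg Prod.fst huv
    have h2 : rhsR (m + 2) q x = rhsR (m + 2) q (cc 0 1 u v) := congrArg Prod.snd huv
    rw [h1, h2, rhsR_cc, h]

theorem z3_arity_gap_classification {n : ℕ} (hn : 4 ≤ n)
    (f : (Fin n → ZMod 3) → ZMod 3) (hdep : ∀ i, essentialAt f i) :
    (arityGap f = 2 ↔ ∃! q : ZMod 3 × ZMod 3 × ZMod 3 × ZMod 3, z3Cond f q) ∧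
    (arityGap f = 2 ∨ arityGap f = 1) := by
  by_cases hT : ∀ i j, i ≠ j → TT f i j
  · have hg := gap_two hn hdep hT
    refine ⟨⟨fun _ => ?_, fun _ => hg⟩, Or.inl hg⟩
    obtain ⟨m, rfl⟩ : ∃ m, n = m + 2 := ⟨n - 2, by omega⟩
    have h01 : (0 : Fin (m + 2)) ≠ 1 := by simp
    obtain ⟨q, hq⟩ := valW_exists (m + 2) (fun u v => f (cc 0 1 u v))
      (fun u v => cc_symm hn hT h01 u v) (fun u => cc_diag hT h01 u)
    refine ⟨q, (z3Cond_iff_val hn f hT q).2 hq, fun q' hq' => ?_⟩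
    have hq'' := (z3Cond_iff_val hn f hT q').1 hq'
    exact valW_unique (m + 2) q' q fun u v => (hq'' u v).symm.trans (hq u v)
  · have hg := gap_one hn hdep hT
    refine ⟨⟨fun h => ?_, fun h => ?_⟩, Or.inr hg⟩
    · omega
    · obtain ⟨q, hq, -⟩ := h
      exact absurd (z3Cond_TT f q hq) hT
end
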